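/- arXiv:2509.22076 — 3 statements merged into one kernel-verified Lean document; each statement's English description precedes it below -/
import Mathlib

section
/- Let z̄ ∈ PC¹(D̄) and x₀ ∈ ℝ, and define on D̄_j: Ā^{(z̄,x₀),j}(t,x̄) = (A(z̄(t,x̄)) − x_t^{(z̄,x₀),j}(t,x̄) I)(x_x̄^{(z̄,x₀),j}(t,x̄))⁻¹ and ḡ^{(z̄,x₀),j}(t,x̄,ȳ) = g(t, x^{(z̄,x₀),j}(t,x̄), ȳ). If ȳ ∈ C¹(D̄_j;ℝⁿ) is a classical solution of ȳ_t + Ā^{(z̄,x₀),j} ȳ_x̄ = ḡ^{(z̄,x₀),j}(·,ȳ) on D̄_j, then y(t,x) = ȳ(t, x̄^{(z̄,x₀),j}(t,x)) is a classical C¹ solution of y_t + A(z) y_x = g(·,y) on the physical sector D_j^{(z̄,x₀)} bounded by the curves ξ_j^{(z̄,x₀)} and ξ_{j+1}^{(z̄,x₀)} (respectively ξ_ℓ^{(z̄,x₀)}, ξ₁^{(z̄,x₀)} for j = 0 and ξₙ^{(z̄,x₀)}, ξ_r^{(z̄,x₀)} for j = n), where z(t,x) = z̄(t, x̄^{(z̄,x₀),j}(t,x));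 the converse implication also holds. If moreover the smallness assumptions hold, then each matrix Ā^{(z̄,x₀),j}(t,x̄) is strictly hyperbolic. -/
open Set MeasureTheory intervalIntegral
open scoped RealInnerProductSpace BoundedContinuousFunction Classical

noncomputable section

/-- The state space `ℝ^{n+1}` (the system has dimension `n+1 ≥ 1`). -/
abbrev Rd (n : ℕ) : Type := EuclideanSpace ℝ (Fin (n + 1))

/-- Piecewise data on the reference space: one function per sector `D̄_j`, `j = 0, …, n+1`. -/
abbrev Comp (n : ℕ) : Type := Fin (n + 2) → ℝ × ℝ → Rd n

/-- The fixed data of the Generalized Riemann Problem in the reference space: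
time horizon `T`, half-length `ℓ`, maximal characteristic speed `lmax`,
reference shock speeds `s`, eigenvalues `lam` and (normalized) left/right eigenvectors
`lvec`, `rvec` of `A(y) = f'(y)`, the corresponding data `lam2`, `l2vec`, `r2vec` of the
averaged matrix `A(y₁,y₂) = ∫₀¹ A(σy₁+(1-σ)y₂)dσ`, the flux `f` and the source `g`. -/
structure Ctx (n : ℕ) where
  T : ℝ
  ℓ : ℝ
  lmax : ℝ
  s : Fin (n + 1) → ℝ
  lam : Rd n → Fin (n + 1) → ℝ
  lam2 : Rd n → Rd n → Fin (n + 1) → ℝ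
  lvec : Rd n → Fin (n + 1) → Rd n
  rvec : Rd n → Fin (n + 1) → Rd n
  l2vec : Rd n → Rd n → Fin (n + 1) → Rd n
  r2vec : Rd n → Rd n → Fin (n + 1) → Rd n
  f : Rd n → Rd n
  g : ℝ → ℝ → Rd n → Rd n

namespace Ctx

variable {n : ℕ} (C : Ctx n)

/-- Standing structural hypotheses: strict hyperbolicity with normalized eigen data,
both for `A(y) = f'(y)` and for the averaged matrix `A(y₁,y₂)`. -/
structure IsHyperbolicData : Prop where
  hT : 0 < C.T
  hl : 0 < C.ℓ
  hlmax : 0 < C.lmax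
  hsMono : StrictMono C.s
  hsBound : ∀ k, |C.s k| ≤ C.lmax
  hf : ContDiff ℝ 2 C.f
  hlamMono : ∀ y, StrictMono (C.lam y)
  hlamBound : ∀ y i, |C.lam y i| ≤ C.lmax
  hEig : ∀ y i, fderiv ℝ C.f y (C.rvec y i) = C.lam y i • C.rvec y i
  hEigL : ∀ y i v, ⟪C.lvec y i, fderiv ℝ C.f y v⟫ = C.lam y i * ⟪C.lvec y i, v⟫
  hrNorm : ∀ y i, ‖C.rvec y i‖ = 1
  hlr : ∀ y i k, ⟪C.lvec y i, C.rvec y k⟫ = if i = k then (1 : ℝ) else 0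
  hlam2Mono : ∀ y₁ y₂, StrictMono (C.lam2 y₁ y₂)
  hlam2Bound : ∀ y₁ y₂ i, |C.lam2 y₁ y₂ i| ≤ C.lmax
  hEig2 : ∀ y₁ y₂ i,
    (∫ σ in (0:ℝ)..1, fderiv ℝ C.f (σ • y₁ + (1 - σ) • y₂) (C.r2vec y₁ y₂ i)) =
      C.lam2 y₁ y₂ i • C.r2vec y₁ y₂ i
  hEig2L : ∀ y₁ y₂ i v,
    ⟪C.l2vec y₁ y₂ i, ∫ σ in (0:ℝ)..1, fderiv ℝ C.f (σ • y₁ + (1 - σ) • y₂) v⟫ =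
      C.lam2 y₁ y₂ i * ⟪C.l2vec y₁ y₂ i, v⟫
  hr2Norm : ∀ y₁ y₂ i, ‖C.r2vec y₁ y₂ i‖ = 1
  hl2r2 : ∀ y₁ y₂ i k, ⟪C.l2vec y₁ y₂ i, C.r2vec y₁ y₂ k⟫ = if i = k then (1 : ℝ) else 0

/-- The sector `D̄_j` of the reference space, `j = 0, …, n+1`. -/
def sector (j : Fin (n + 2)) : Set (ℝ × ℝ) :=
  {p | p.1 ∈ Icc (0 : ℝ) C.T ∧
    (if h1 : (j : ℕ) = 0 then -C.ℓ + C.lmax * p.1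
      else C.s ⟨(j : ℕ) - 1, by have := j.isLt; omega⟩ * p.1) ≤ p.2 ∧
    p.2 ≤ if h2 : (j : ℕ) = n + 1 then C.ℓ - C.lmax * p.1
      else C.s ⟨(j : ℕ), by have := j.isLt; omega⟩ * p.1}

/-- `ȳ` is piecewise continuous: each component is continuous on its sector. -/
def IsPC0 (ybar : Comp n) : Prop := ∀ j, ContinuousOn (ybar j) (C.sector j)

/-- `ȳ` is piecewise `C¹`: each component is `C¹` on its sector. -/
def IsPC1 (ybar : Comp n) : Prop := ∀ j, ContDiffOn ℝ 1 (ybar j) (C.sector j)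

/-- `PC⁰`-sup of piecewise data (the `PC⁰(D̄)`-norm). -/
def pcSup (ys : Comp n) : ℝ :=
  ⨆ j : Fin (n + 2), ⨆ p : C.sector j, ‖ys j p.1‖

/-- `PC⁰`-sup of piecewise data up to time `t` (the `PC⁰(D̄ᵗ)`-norm). -/
def pcSupT (t : ℝ) (ys : Comp n) : ℝ :=
  ⨆ j : Fin (n + 2),
    ⨆ p : (C.sector j ∩ {q : ℝ × ℝ | q.1 ≤ t} : Set (ℝ × ℝ)), ‖ys j p.1‖

/-- `ȳ` is bounded by `Cb` in the `PC¹(D̄)`-norm. -/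
def PC1BoundedBy (ybar : Comp n) (Cb : ℝ) : Prop :=
  ∀ j, ∀ p ∈ C.sector j,
    ‖ybar j p‖ ≤ Cb ∧ ‖fderivWithin ℝ (ybar j) (C.sector j) p‖ ≤ Cb

/-- The left boundary curve `ξ_ℓ^{(ȳ,x₀)}`. -/
def xiL (ybar : Comp n) (t : ℝ) : ℝ :=
  -C.ℓ + ∫ τ in (0:ℝ)..t, C.lam (ybar 0 (τ, -C.ℓ + C.lmax * τ)) (Fin.last n)

/-- The right boundary curve `ξ_r^{(ȳ,x₀)}`. -/
def xiR (ybar : Comp n) (t : ℝ) : ℝ :=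
  C.ℓ + ∫ τ in (0:ℝ)..t, C.lam (ybar (Fin.last (n + 1)) (τ, C.ℓ - C.lmax * τ)) 0

/-- The `k`-th shock curve `ξ_k^{(ȳ,x₀)}` (`k = 0, …, n` indexes the `n+1` shocks). -/
def xiS (x₀ : ℝ) (ybar : Comp n) (k : Fin (n + 1)) (t : ℝ) : ℝ :=
  x₀ + ∫ τ in (0:ℝ)..t,
    C.lam2 (ybar k.castSucc (τ, C.s k * τ)) (ybar k.succ (τ, C.s k * τ)) k

/-- The state-dependent space transformation `x^{(ȳ,x₀),j}` from the reference
space to physical coordinates (linear interpolation between consecutive curves). -/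
def xTrafo (x₀ : ℝ) (ybar : Comp n) (j : Fin (n + 2)) (p : ℝ × ℝ) : ℝ :=
  if h1 : (j : ℕ) = 0 then
    ((p.2 - (-C.ℓ + C.lmax * p.1)) * C.xiS x₀ ybar 0 p.1
        + (C.s 0 * p.1 - p.2) * C.xiL ybar p.1)
      / (C.s 0 * p.1 - (-C.ℓ + C.lmax * p.1))
  else if h2 : (j : ℕ) = n + 1 then
    ((p.2 - C.s (Fin.last n) * p.1) * C.xiR ybar p.1
        + ((C.ℓ - C.lmax * p.1) - p.2) * C.xiS x₀ ybar (Fin.last n) p.1)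
      / ((C.ℓ - C.lmax * p.1) - C.s (Fin.last n) * p.1)
  else if p.1 = 0 then x₀
  else
    ((p.2 - C.s ⟨(j : ℕ) - 1, by have := j.isLt; omega⟩ * p.1) *
        C.xiS x₀ ybar ⟨(j : ℕ), by have := j.isLt; omega⟩ p.1
      + (C.s ⟨(j : ℕ), by have := j.isLt; omega⟩ * p.1 - p.2) *
        C.xiS x₀ ybar ⟨(j : ℕ) - 1, by have := j.isLt; omega⟩ p.1)
      / ((C.s ⟨(j : ℕ), by have := j.isLt; omega⟩ -
          C.s ⟨(j : ℕ) - 1, by have := j.isLt; omega⟩) * p.1)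

/-- The inverse space transformation `x̄^{(ȳ,x₀),j}` from physical coordinates
to the reference space. -/
def xbarTrafo (x₀ : ℝ) (ybar : Comp n) (j : Fin (n + 2)) (p : ℝ × ℝ) : ℝ :=
  if h1 : (j : ℕ) = 0 then
    ((p.2 - C.xiL ybar p.1) * (C.s 0 * p.1)
        + (C.xiS x₀ ybar 0 p.1 - p.2) * (-C.ℓ + C.lmax * p.1))
      / (C.xiS x₀ ybar 0 p.1 - C.xiL ybar p.1)
  else if h2 : (j : ℕ) = n + 1 then
    ((p.2 - C.xiS x₀ ybar (Fin.last n) p.1) * (C.ℓ - C.lmax * p.1)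
        + (C.xiR ybar p.1 - p.2) * (C.s (Fin.last n) * p.1))
      / (C.xiR ybar p.1 - C.xiS x₀ ybar (Fin.last n) p.1)
  else if p.1 = 0 then 0
  else
    ((p.2 - C.xiS x₀ ybar ⟨(j : ℕ) - 1, by have := j.isLt; omega⟩ p.1) *
        (C.s ⟨(j : ℕ), by have := j.isLt; omega⟩ * p.1)
      + (C.xiS x₀ ybar ⟨(j : ℕ), by have := j.isLt; omega⟩ p.1 - p.2) *
        (C.s ⟨(j : ℕ) - 1, by have := j.isLt; omega⟩ * p.1))
      / (C.xiS x₀ ybar ⟨(j : ℕ), by have := j.isLt; omega⟩ p.1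
          - C.xiS x₀ ybar ⟨(j : ℕ) - 1, by have := j.isLt; omega⟩ p.1)

/-- The `j`-th sector in physical coordinates, `D_j^{(ȳ,x₀)}`. -/
def physSector (x₀ : ℝ) (ybar : Comp n) (j : Fin (n + 2)) : Set (ℝ × ℝ) :=
  {p | p.1 ∈ Icc (0 : ℝ) C.T ∧
    (if h1 : (j : ℕ) = 0 then C.xiL ybar p.1
      else C.xiS x₀ ybar ⟨(j : ℕ) - 1, by have := j.isLt; omega⟩ p.1) ≤ p.2 ∧
    p.2 ≤ if h2 : (j : ℕ) = n + 1 then C.xiR ybar p.1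
      else C.xiS x₀ ybar ⟨(j : ℕ), by have := j.isLt; omega⟩ p.1}

/-- The transformed coefficient matrix
`Ā^{(z̄,x₀),j} = (A(z̄) - x_t^{(z̄,x₀),j} I) (x_x̄^{(z̄,x₀),j})⁻¹` acting on a vector `v`. -/
def AbarOp (x₀ : ℝ) (zbar : Comp n) (j : Fin (n + 2)) (p : ℝ × ℝ) (v : Rd n) : Rd n :=
  (fderivWithin ℝ (C.xTrafo x₀ zbar j) (C.sector j) p (0, 1))⁻¹ •
    (fderiv ℝ C.f (zbar j p) v -
      fderivWithin ℝ (C.xTrafo x₀ zbar j) (C.sector j) p (1, 0) • v)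

/-- The eigenvalue fields `λ̄_i^{(z̄,x₀)}` of the transformed matrix `Ā^{(z̄,x₀)}`,
`λ̄_i = x̄_t + x̄_x λ_i(z̄)` evaluated at the corresponding physical point. -/
def lamBarQ (x₀ : ℝ) (zbar : Comp n) (j : Fin (n + 2)) (p : ℝ × ℝ) (i : Fin (n + 1)) : ℝ :=
  fderivWithin ℝ (C.xbarTrafo x₀ zbar j) (C.physSector x₀ zbar j)
    (p.1, C.xTrafo x₀ zbar j p) (1, C.lam (zbar j p) i)

/-- The minimal-angle property for a family of characteristic speed fields. -/
def MinAngle (lamBar : Fin (n + 2) → ℝ × ℝ → Fin (n + 1) → ℝ) (η : ℝ) : Prop :=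
  ∀ j, ∀ p ∈ C.sector j, ∀ i k : Fin (n + 1), i ≠ k →
    η ≤ |lamBar j p i - lamBar j p k|

/-- The entropy condition on all transformed shocks `Σ_k`. -/
def EntropyCond (lamBar : Fin (n + 2) → ℝ × ℝ → Fin (n + 1) → ℝ) : Prop :=
  ∀ k : Fin (n + 1), ∀ t ∈ Icc (0 : ℝ) C.T,
    lamBar k.castSucc (t, C.s k * t) k ≥ C.s k ∧
    C.s k ≥ lamBar k.succ (t, C.s k * t) k ∧
    (∀ i : Fin (n + 1), (i : ℕ) < (k : ℕ) →
      lamBar k.castSucc (t, C.s k * t) i < C.s k ∧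
      lamBar k.succ (t, C.s k * t) i < C.s k) ∧
    (∀ i : Fin (n + 1), (k : ℕ) < (i : ℕ) →
      C.s k < lamBar k.castSucc (t, C.s k * t) i ∧
      C.s k < lamBar k.succ (t, C.s k * t) i)

/-- Characteristic component `ȳ_i^j = l_i(z̄^j)ᵀ ȳ^j`. -/
def charComp (zbar ybar : Comp n) (j : Fin (n + 2)) (i : Fin (n + 1)) (p : ℝ × ℝ) : ℝ :=
  ⟪C.lvec (zbar j p) i, ybar j p⟫

/-- The transformed characteristic source term
`h̄_i(ȳ) = l_i(z̄)ᵀ h̄(ȳ) + (∂_t l_i(z̄) + λ̄_i ∂_x̄ l_i(z̄))ᵀ ȳ`. -/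
def hbarChar (zbar : Comp n) (lamBar : Fin (n + 2) → ℝ × ℝ → Fin (n + 1) → ℝ)
    (hbar : Comp n → Comp n) (ybar : Comp n) (j : Fin (n + 2)) (i : Fin (n + 1))
    (p : ℝ × ℝ) : ℝ :=
  ⟪C.lvec (zbar j p) i, hbar ybar j p⟫ +
    ⟪fderivWithin ℝ (fun q => C.lvec (zbar j q) i) (C.sector j) p (1, lamBar j p i),
      ybar j p⟫

/-- Broad solution of the semilinear system
`ȳ_t + Ā^{(z̄,x₀)} ȳ_x̄ = h̄(ȳ)`, `ȳ⁰(0,·) = u_l`, `ȳ^{n+1}(0,·) = u_r`,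
with interior boundary conditions `F i k` on the transformed shocks `Σ_k`:
the characteristic components satisfy the integral equations along every
characteristic curve `χ` of the speed field `lamBar`, with data transported
from `t = 0` on the outer sectors and from the incoming shock in the middle
sectors (`F i k (t, v, v¹, v²)`; `v` the incoming characteristic component,
`v¹`/`v²` the states left/right of the shock `k`). -/
def IsBroadSol (zbar : Comp n) (lamBar : Fin (n + 2) → ℝ × ℝ → Fin (n + 1) → ℝ)
    (hbar : Comp n → Comp n)
    (F : Fin (n + 1) → Fin (n + 1) → ℝ → ℝ → Rd n → Rd n → ℝ)
    (ul ur : ℝ → Rd n) (ybar : Comp n) : Prop :=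
  C.IsPC0 ybar ∧
  (∀ i, ∀ p ∈ C.sector 0, ∀ χ : ℝ → ℝ, χ p.1 = p.2 →
    (∀ τ ∈ Icc (0 : ℝ) p.1,
      HasDerivAt χ (lamBar 0 (τ, χ τ) i) τ ∧ (τ, χ τ) ∈ C.sector 0) →
    C.charComp zbar ybar 0 i p =
      ⟪C.lvec (zbar 0 (0, χ 0)) i, ul (χ 0)⟫ +
        ∫ τ in (0 : ℝ)..p.1, C.hbarChar zbar lamBar hbar ybar 0 i (τ, χ τ)) ∧
  (∀ i, ∀ p ∈ C.sector (Fin.last (n + 1)), ∀ χ : ℝ → ℝ, χ p.1 = p.2 →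
    (∀ τ ∈ Icc (0 : ℝ) p.1,
      HasDerivAt χ (lamBar (Fin.last (n + 1)) (τ, χ τ) i) τ ∧
        (τ, χ τ) ∈ C.sector (Fin.last (n + 1))) →
    C.charComp zbar ybar (Fin.last (n + 1)) i p =
      ⟪C.lvec (zbar (Fin.last (n + 1)) (0, χ 0)) i, ur (χ 0)⟫ +
        ∫ τ in (0 : ℝ)..p.1,
          C.hbarChar zbar lamBar hbar ybar (Fin.last (n + 1)) i (τ, χ τ)) ∧
  (∀ j : Fin (n + 2), ∀ hj1 : (j : ℕ) ≠ 0, ∀ hj2 : (j : ℕ) ≠ n + 1,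
    ∀ i : Fin (n + 1), ∀ p ∈ C.sector j, ∀ χ : ℝ → ℝ, ∀ t₀ ∈ Icc (0 : ℝ) p.1,
    χ p.1 = p.2 →
    (∀ τ ∈ Icc t₀ p.1,
      HasDerivAt χ (lamBar j (τ, χ τ) i) τ ∧ (τ, χ τ) ∈ C.sector j) →
    (((j : ℕ) ≤ (i : ℕ)) →
      χ t₀ = C.s ⟨(j : ℕ) - 1, by have := j.isLt; omega⟩ * t₀ →
      C.charComp zbar ybar j i p =
        F i ⟨(j : ℕ) - 1, by have := j.isLt; omega⟩ t₀
          (C.charComp zbar ybar ⟨(j : ℕ) - 1, by have := j.isLt; omega⟩ i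
            (t₀, C.s ⟨(j : ℕ) - 1, by have := j.isLt; omega⟩ * t₀))
          (ybar ⟨(j : ℕ) - 1, by have := j.isLt; omega⟩
            (t₀, C.s ⟨(j : ℕ) - 1, by have := j.isLt; omega⟩ * t₀))
          (ybar j (t₀, C.s ⟨(j : ℕ) - 1, by have := j.isLt; omega⟩ * t₀)) +
          ∫ τ in t₀..p.1, C.hbarChar zbar lamBar hbar ybar j i (τ, χ τ)) ∧
    (((i : ℕ) < (j : ℕ)) →
      χ t₀ = C.s ⟨(j : ℕ), by have := j.isLt; omega⟩ * t₀ →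
      C.charComp zbar ybar j i p =
        F i ⟨(j : ℕ), by have := j.isLt; omega⟩ t₀
          (C.charComp zbar ybar ⟨(j : ℕ) + 1, by have := j.isLt; omega⟩ i
            (t₀, C.s ⟨(j : ℕ), by have := j.isLt; omega⟩ * t₀))
          (ybar j (t₀, C.s ⟨(j : ℕ), by have := j.isLt; omega⟩ * t₀))
          (ybar ⟨(j : ℕ) + 1, by have := j.isLt; omega⟩
            (t₀, C.s ⟨(j : ℕ), by have := j.isLt; omega⟩ * t₀)) +
          ∫ τ in t₀..p.1, C.hbarChar zbar lamBar hbar ybar j i (τ, χ τ)))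

/-- The Rankine–Hugoniot interior boundary operator `G_i^j` (case of fast fields `i > j`). -/
def Gfast (i : Fin (n + 1)) (v : ℝ) (v1 v2 : Rd n) : ℝ :=
  v + ⟪C.lvec v2 i - C.lvec v1 i, v1⟫ -
    ∑ k ∈ Finset.univ.erase i,
      (⟪C.l2vec v1 v2 i, C.rvec v2 k⟫ / ⟪C.l2vec v1 v2 i, C.rvec v2 i⟫) *
        ⟪C.lvec v2 k, v2 - v1⟫

/-- The Rankine–Hugoniot interior boundary operator `G_i^j` (case of slow fields `i < j`). -/
def Gslow (i : Fin (n + 1)) (v : ℝ) (v1 v2 : Rd n) : ℝ :=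
  v + ⟪C.lvec v1 i - C.lvec v2 i, v2⟫ -
    ∑ k ∈ Finset.univ.erase i,
      (⟪C.l2vec v1 v2 i, C.rvec v1 k⟫ / ⟪C.l2vec v1 v2 i, C.rvec v1 i⟫) *
        ⟪C.lvec v1 k, v1 - v2⟫

/-- The dilation `D_l(u_l, x₀)`. -/
def dilL (x₀ : ℝ) (u : ℝ → Rd n) (x : ℝ) : Rd n := u (x + (x + C.ℓ) / C.ℓ * x₀)

/-- The dilation `D_r(u_r, x₀)`. -/
def dilR (x₀ : ℝ) (u : ℝ → Rd n) (x : ℝ) : Rd n := u (x - (x - C.ℓ) / C.ℓ * x₀)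

/-- `ȳ` is a piecewise-`C¹` solution of the Generalized Riemann Problem in the
reference space: the quasilinear equation `ȳ_t + Ā^{(ȳ,x₀)}ȳ_x̄ = ḡ^{(ȳ,x₀)}`
holds classically on each sector, the dilated initial conditions hold, and the
Rankine–Hugoniot interior boundary conditions hold on each transformed shock. -/
def IsRefSol (x₀ : ℝ) (ul ur : ℝ → Rd n) (ybar : Comp n) : Prop :=
  C.IsPC1 ybar ∧
  (∀ j, ∀ p ∈ C.sector j,
    fderivWithin ℝ (ybar j) (C.sector j) p (1, 0) +
      C.AbarOp x₀ ybar j p (fderivWithin ℝ (ybar j) (C.sector j) p (0, 1)) =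
      C.g p.1 (C.xTrafo x₀ ybar j p) (ybar j p)) ∧
  (∀ x ∈ Icc (-C.ℓ) (0 : ℝ), ybar 0 (0, x) = C.dilL x₀ ul x) ∧
  (∀ x ∈ Icc (0 : ℝ) C.ℓ, ybar (Fin.last (n + 1)) (0, x) = C.dilR x₀ ur x) ∧
  (∀ k : Fin (n + 1), ∀ t ∈ Icc (0 : ℝ) C.T, ∀ i : Fin (n + 1),
    ((k : ℕ) < (i : ℕ) →
      ⟪C.lvec (ybar k.succ (t, C.s k * t)) i, ybar k.succ (t, C.s k * t)⟫ =
        C.Gfast i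
          ⟪C.lvec (ybar k.castSucc (t, C.s k * t)) i, ybar k.castSucc (t, C.s k * t)⟫
          (ybar k.castSucc (t, C.s k * t)) (ybar k.succ (t, C.s k * t))) ∧
    ((i : ℕ) < (k : ℕ) →
      ⟪C.lvec (ybar k.castSucc (t, C.s k * t)) i, ybar k.castSucc (t, C.s k * t)⟫ =
        C.Gslow i
          ⟪C.lvec (ybar k.succ (t, C.s k * t)) i, ybar k.succ (t, C.s k * t)⟫
          (ybar k.castSucc (t, C.s k * t)) (ybar k.succ (t, C.s k * t))))

/-- Membership in the admissible control set `U_ad`. -/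
def InUad (uL uR : Rd n) (M₀ M₁ ε : ℝ) (ul ur : ℝ → Rd n) (x₀ : ℝ) : Prop :=
  ContDiffOn ℝ 1 ul (Icc (-C.ℓ) ε) ∧ ContDiffOn ℝ 1 ur (Icc (-ε) C.ℓ) ∧
  (∀ x ∈ Icc (-C.ℓ) ε, ‖ul x - uL‖ < M₀ ∧ ‖derivWithin ul (Icc (-C.ℓ) ε) x‖ < M₁) ∧
  (∀ x ∈ Icc (-ε) C.ℓ, ‖ur x - uR‖ < M₀ ∧ ‖derivWithin ur (Icc (-ε) C.ℓ) x‖ < M₁) ∧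
  x₀ ∈ Ioo (-ε) ε

/-- Directional (Fréchet) derivative of the shock curve `ξ_k^{(ȳ,x₀)}`
in the direction `(δȳ, δx₀)`. -/
def deltaXiS (ybar δybar : Comp n) (δx₀ : ℝ) (k : Fin (n + 1)) (t : ℝ) : ℝ :=
  δx₀ + ∫ τ in (0 : ℝ)..t,
    fderiv ℝ (fun q : Rd n × Rd n => C.lam2 q.1 q.2 k)
      (ybar k.castSucc (τ, C.s k * τ), ybar k.succ (τ, C.s k * τ))
      (δybar k.castSucc (τ, C.s k * τ), δybar k.succ (τ, C.s k * τ))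

/-- Directional derivative of the left boundary curve `ξ_ℓ^{(ȳ,x₀)}`. -/
def deltaXiL (ybar δybar : Comp n) (t : ℝ) : ℝ :=
  ∫ τ in (0 : ℝ)..t,
    fderiv ℝ (fun y => C.lam y (Fin.last n)) (ybar 0 (τ, -C.ℓ + C.lmax * τ))
      (δybar 0 (τ, -C.ℓ + C.lmax * τ))

/-- Directional derivative of the right boundary curve `ξ_r^{(ȳ,x₀)}`. -/
def deltaXiR (ybar δybar : Comp n) (t : ℝ) : ℝ :=
  ∫ τ in (0 : ℝ)..t,
    fderiv ℝ (fun y => C.lam y 0) (ybar (Fin.last (n + 1)) (τ, C.ℓ - C.lmax * τ))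
      (δybar (Fin.last (n + 1)) (τ, C.ℓ - C.lmax * τ))

/-- Directional derivative `d_{(ȳ,x₀)}x^{(ȳ,x₀),j}·(δȳ,δx₀)` of the space transformation. -/
def deltaXTrafo (ybar δybar : Comp n) (δx₀ : ℝ) (j : Fin (n + 2)) (p : ℝ × ℝ) : ℝ :=
  if h1 : (j : ℕ) = 0 then
    ((p.2 - (-C.ℓ + C.lmax * p.1)) * C.deltaXiS ybar δybar δx₀ 0 p.1
        + (C.s 0 * p.1 - p.2) * C.deltaXiL ybar δybar p.1)
      / (C.s 0 * p.1 - (-C.ℓ + C.lmax * p.1))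
  else if h2 : (j : ℕ) = n + 1 then
    ((p.2 - C.s (Fin.last n) * p.1) * C.deltaXiR ybar δybar p.1
        + ((C.ℓ - C.lmax * p.1) - p.2) * C.deltaXiS ybar δybar δx₀ (Fin.last n) p.1)
      / ((C.ℓ - C.lmax * p.1) - C.s (Fin.last n) * p.1)
  else if p.1 = 0 then δx₀
  else
    ((p.2 - C.s ⟨(j : ℕ) - 1, by have := j.isLt; omega⟩ * p.1) *
        C.deltaXiS ybar δybar δx₀ ⟨(j : ℕ), by have := j.isLt; omega⟩ p.1
      + (C.s ⟨(j : ℕ), by have := j.isLt; omega⟩ * p.1 - p.2) *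
        C.deltaXiS ybar δybar δx₀ ⟨(j : ℕ) - 1, by have := j.isLt; omega⟩ p.1)
      / ((C.s ⟨(j : ℕ), by have := j.isLt; omega⟩ -
          C.s ⟨(j : ℕ) - 1, by have := j.isLt; omega⟩) * p.1)

/-- Directional derivative `d_{(ȳ,x₀)}x̄^{(ȳ,x₀),j}·(δȳ,δx₀)` of the inverse
space transformation, at a physical point `p = (t,x)`. -/
def deltaXbarTrafo (x₀ : ℝ) (ybar δybar : Comp n) (δx₀ : ℝ) (j : Fin (n + 2))
    (p : ℝ × ℝ) : ℝ :=
  if h1 : (j : ℕ) = 0 then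
    (((-(C.deltaXiL ybar δybar p.1)) * (C.s 0 * p.1) +
        C.deltaXiS ybar δybar δx₀ 0 p.1 * (-C.ℓ + C.lmax * p.1)) *
        (C.xiS x₀ ybar 0 p.1 - C.xiL ybar p.1) -
      ((p.2 - C.xiL ybar p.1) * (C.s 0 * p.1) +
        (C.xiS x₀ ybar 0 p.1 - p.2) * (-C.ℓ + C.lmax * p.1)) *
        (C.deltaXiS ybar δybar δx₀ 0 p.1 - C.deltaXiL ybar δybar p.1))
      / (C.xiS x₀ ybar 0 p.1 - C.xiL ybar p.1) ^ 2
  else if h2 : (j : ℕ) = n + 1 then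
    (((-(C.deltaXiS ybar δybar δx₀ (Fin.last n) p.1)) * (C.ℓ - C.lmax * p.1) +
        C.deltaXiR ybar δybar p.1 * (C.s (Fin.last n) * p.1)) *
        (C.xiR ybar p.1 - C.xiS x₀ ybar (Fin.last n) p.1) -
      ((p.2 - C.xiS x₀ ybar (Fin.last n) p.1) * (C.ℓ - C.lmax * p.1) +
        (C.xiR ybar p.1 - p.2) * (C.s (Fin.last n) * p.1)) *
        (C.deltaXiR ybar δybar p.1 - C.deltaXiS ybar δybar δx₀ (Fin.last n) p.1))
      / (C.xiR ybar p.1 - C.xiS x₀ ybar (Fin.last n) p.1) ^ 2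
  else if p.1 = 0 then 0
  else
    (((-(C.deltaXiS ybar δybar δx₀ ⟨(j : ℕ) - 1, by have := j.isLt; omega⟩ p.1)) *
        (C.s ⟨(j : ℕ), by have := j.isLt; omega⟩ * p.1) +
        C.deltaXiS ybar δybar δx₀ ⟨(j : ℕ), by have := j.isLt; omega⟩ p.1 *
          (C.s ⟨(j : ℕ) - 1, by have := j.isLt; omega⟩ * p.1)) *
        (C.xiS x₀ ybar ⟨(j : ℕ), by have := j.isLt; omega⟩ p.1 -
          C.xiS x₀ ybar ⟨(j : ℕ) - 1, by have := j.isLt; omega⟩ p.1) -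
      ((p.2 - C.xiS x₀ ybar ⟨(j : ℕ) - 1, by have := j.isLt; omega⟩ p.1) *
          (C.s ⟨(j : ℕ), by have := j.isLt; omega⟩ * p.1) +
        (C.xiS x₀ ybar ⟨(j : ℕ), by have := j.isLt; omega⟩ p.1 - p.2) *
          (C.s ⟨(j : ℕ) - 1, by have := j.isLt; omega⟩ * p.1)) *
        (C.deltaXiS ybar δybar δx₀ ⟨(j : ℕ), by have := j.isLt; omega⟩ p.1 -
          C.deltaXiS ybar δybar δx₀ ⟨(j : ℕ) - 1, by have := j.isLt; omega⟩ p.1))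
      / (C.xiS x₀ ybar ⟨(j : ℕ), by have := j.isLt; omega⟩ p.1 -
          C.xiS x₀ ybar ⟨(j : ℕ) - 1, by have := j.isLt; omega⟩ p.1) ^ 2

/-- Directional derivative of `Ā^{(ȳ,x₀),j}`, applied to `v`. -/
def sensAbar (x₀ : ℝ) (ybar δybar : Comp n) (δx₀ : ℝ) (j : Fin (n + 2)) (p : ℝ × ℝ)
    (v : Rd n) : Rd n :=
  (fderivWithin ℝ (C.xTrafo x₀ ybar j) (C.sector j) p (0, 1))⁻¹ •
      (fderiv ℝ (fun y => fderiv ℝ C.f y v) (ybar j p) (δybar j p) -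
        fderivWithin ℝ (C.deltaXTrafo ybar δybar δx₀ j) (C.sector j) p (1, 0) • v) -
    (fderivWithin ℝ (C.deltaXTrafo ybar δybar δx₀ j) (C.sector j) p (0, 1) /
        (fderivWithin ℝ (C.xTrafo x₀ ybar j) (C.sector j) p (0, 1)) ^ 2) •
      (fderiv ℝ C.f (ybar j p) v -
        fderivWithin ℝ (C.xTrafo x₀ ybar j) (C.sector j) p (1, 0) • v)

/-- The source term of the linearized (sensitivity) system:
`d_{(ȳ,x₀)}ḡ^{(ȳ,x₀)}·(δȳ,δx₀) - (d_{(ȳ,x₀)}Ā^{(ȳ,x₀)}·(δȳ,δx₀)) ȳ_x̄`. -/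
def sensSource (x₀ : ℝ) (ybar : Comp n) (δybar : Comp n) (δx₀ : ℝ) (j : Fin (n + 2))
    (p : ℝ × ℝ) : Rd n :=
  fderiv ℝ (fun q : ℝ × Rd n => C.g p.1 q.1 q.2) (C.xTrafo x₀ ybar j p, ybar j p)
      (C.deltaXTrafo ybar δybar δx₀ j p, δybar j p) -
    C.sensAbar x₀ ybar δybar δx₀ j p (fderivWithin ℝ (ybar j) (C.sector j) p (0, 1))

/-- The linearized Rankine–Hugoniot boundary operator `B_i^j` (fast fields). -/
def Bfast (ybar : Comp n) (k : Fin (n + 1)) (i : Fin (n + 1)) (t : ℝ) (v : ℝ)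
    (v1 v2 : Rd n) : ℝ :=
  fderiv ℝ (fun q : ℝ × Rd n × Rd n => C.Gfast i q.1 q.2.1 q.2.2)
      (⟪C.lvec (ybar k.castSucc (t, C.s k * t)) i, ybar k.castSucc (t, C.s k * t)⟫,
        ybar k.castSucc (t, C.s k * t), ybar k.succ (t, C.s k * t))
      (v, v1, v2) -
    ⟪fderiv ℝ (fun y => C.lvec y i) (ybar k.succ (t, C.s k * t)) v2,
      ybar k.succ (t, C.s k * t)⟫

/-- The linearized Rankine–Hugoniot boundary operator `B_i^j` (slow fields). -/
def Bslow (ybar : Comp n) (k : Fin (n + 1)) (i : Fin (n + 1)) (t : ℝ) (v : ℝ)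
    (v1 v2 : Rd n) : ℝ :=
  fderiv ℝ (fun q : ℝ × Rd n × Rd n => C.Gslow i q.1 q.2.1 q.2.2)
      (⟪C.lvec (ybar k.succ (t, C.s k * t)) i, ybar k.succ (t, C.s k * t)⟫,
        ybar k.castSucc (t, C.s k * t), ybar k.succ (t, C.s k * t))
      (v, v1, v2) -
    ⟪fderiv ℝ (fun y => C.lvec y i) (ybar k.castSucc (t, C.s k * t)) v1,
      ybar k.castSucc (t, C.s k * t)⟫

/-- The combined linearized interior boundary conditions for the sensitivity system. -/
def Bcond (ybar : Comp n) : Fin (n + 1) → Fin (n + 1) → ℝ → ℝ → Rd n → Rd n → ℝ :=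
  fun i k t v v1 v2 =>
    if (k : ℕ) < (i : ℕ) then C.Bfast ybar k i t v v1 v2 else C.Bslow ybar k i t v v1 v2

/-- The initial datum of the sensitivity system on `[-ℓ,0]` (`ul'` is the derivative
of the left control). -/
def sensInitL (x₀ : ℝ) (δul ul' : ℝ → Rd n) (δx₀ : ℝ) (x : ℝ) : Rd n :=
  C.dilL x₀ δul x + ((x + C.ℓ) / C.ℓ * δx₀) • C.dilL x₀ ul' x

/-- The initial datum of the sensitivity system on `[0,ℓ]`. -/
def sensInitR (x₀ : ℝ) (δur ur' : ℝ → Rd n) (δx₀ : ℝ) (x : ℝ) : Rd n :=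
  C.dilR x₀ δur x + ((x - C.ℓ) / C.ℓ * δx₀) • C.dilR x₀ ur' x

/-- `δȳ` is the broad solution of the linearized (sensitivity) system at the
reference solution `ȳ` with control perturbation `(δu_l, δu_r, δx₀)`. -/
def IsSensSol (x₀ : ℝ) (ybar : Comp n) (δul δur ul' ur' : ℝ → Rd n) (δx₀ : ℝ)
    (δybar : Comp n) : Prop :=
  C.IsBroadSol ybar (fun j p i => C.lamBarQ x₀ ybar j p i)
    (fun δy j p => C.sensSource x₀ ybar δy δx₀ j p) (C.Bcond ybar)
    (C.sensInitL x₀ δul ul' δx₀) (C.sensInitR x₀ δur ur' δx₀) δybar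

/-- The Banach space modelling `PC⁰(D̄)`: bounded continuous functions on each sector. -/
abbrev PCSpace (C : Ctx n) : Type := (j : Fin (n + 2)) → (C.sector j →ᵇ Rd n)

/-- Unbundle an element of `PCSpace` into piecewise data. -/
def toComp (Y : PCSpace C) : Comp n :=
  fun j p => if h : p ∈ C.sector j then Y j ⟨p, h⟩ else 0

/-- The Banach space modelling the control space
`U = C¹([-ℓ,ε];ℝⁿ) × C¹([-ε,ℓ];ℝⁿ) × ℝ`: a `C¹` function is modelled by the
pair (function, derivative) of bounded continuous functions. -/
abbrev CtrlSpace (n : ℕ) : Type :=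
  ((ℝ →ᵇ Rd n) × (ℝ →ᵇ Rd n)) × ((ℝ →ᵇ Rd n) × (ℝ →ᵇ Rd n)) × ℝ

/-- The admissible set `U_ad` inside the control space model: the second entries
are the derivatives of the first on the relevant intervals, and the `C⁰`/`C¹`
bounds defining `V_ad` hold. -/
def UadSet (uL uR : Rd n) (M₀ M₁ ε : ℝ) : Set (CtrlSpace n) :=
  {u | (∀ x ∈ Icc (-C.ℓ) ε,
          HasDerivWithinAt (fun y => u.1.1 y) (u.1.2 x) (Icc (-C.ℓ) ε) x) ∧
       (∀ x ∈ Icc (-ε) C.ℓ,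
          HasDerivWithinAt (fun y => u.2.1.1 y) (u.2.1.2 x) (Icc (-ε) C.ℓ) x) ∧
       (∀ x ∈ Icc (-C.ℓ) ε, ‖u.1.1 x - uL‖ < M₀ ∧ ‖u.1.2 x‖ < M₁) ∧
       (∀ x ∈ Icc (-ε) C.ℓ, ‖u.2.1.1 x - uR‖ < M₀ ∧ ‖u.2.1.2 x‖ < M₁) ∧
       u.2.2 ∈ Ioo (-ε) ε}

/-- The physical solution recovered from a reference-space solution. -/
def physSol (x₀ : ℝ) (ybar : Comp n) (p : ℝ × ℝ) : Rd n :=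
  if h : ∃ j, p ∈ C.physSector x₀ ybar j then
    ybar h.choose (p.1, C.xbarTrafo x₀ ybar h.choose p)
  else 0

/-- The transported sensitivity `δy = T(u)·δu` in physical coordinates. -/
def deltaYPhys (x₀ : ℝ) (ybar δybar : Comp n) (δx₀ : ℝ) (p : ℝ × ℝ) : Rd n :=
  if h : ∃ j, p ∈ C.physSector x₀ ybar j then
    δybar h.choose (p.1, C.xbarTrafo x₀ ybar h.choose p) +
      C.deltaXbarTrafo x₀ ybar δybar δx₀ h.choose p •
        fderivWithin ℝ (ybar h.choose) (C.sector h.choose)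
          (p.1, C.xbarTrafo x₀ ybar h.choose p) (0, 1)
  else 0

/-- `∂_x̄ Ā^{(z̄,x₀),j}` applied to `v` (note `x_x̄^{(z̄,x₀),j}` is independent of `x̄`). -/
def dxAbar (x₀ : ℝ) (zbar : Comp n) (j : Fin (n + 2)) (p : ℝ × ℝ) (v : Rd n) : Rd n :=
  (fderivWithin ℝ (C.xTrafo x₀ zbar j) (C.sector j) p (0, 1))⁻¹ •
    (fderiv ℝ (fun y => fderiv ℝ C.f y v) (zbar j p)
        (fderivWithin ℝ (zbar j) (C.sector j) p (0, 1)) -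
      fderivWithin ℝ
        (fun q => fderivWithin ℝ (C.xTrafo x₀ zbar j) (C.sector j) q (1, 0))
        (C.sector j) p (0, 1) • v)

end Ctx

/-!
A change of variables `x = X(t, x̄)` with `X_x̄ > 0` turns `y_t + A y_x = G` into the same equation
with coefficient `X_x̄⁻¹ (A - X_t I)`. This matrix has the eigenvectors of `A` and shifted, rescaled
eigenvalues, so it inherits strict hyperbolicity. It remains to see that `x^{(z̄,x₀),j}` and its
inverse are `C¹` up to the boundary, which is delicate only at the vertex `t = 0` of the wedge
sectors. There the space slope is the quotient of two running means of speed gaps, which has a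
positive limit. It may fail to be differentiable at `t = 0`, but `t` times its derivative tends to
`0`, and in the gradient of the transformation this derivative only appears multiplied by the
distance to an edge of the wedge, which is `O(t)`.
-/

section ChangeOfVariables

variable {E : Type*} [NormedAddCommGroup E] [NormedSpace ℝ E] {S S' : Set (ℝ × ℝ)}
  {X Xb : ℝ × ℝ → ℝ} {A : ℝ × ℝ → E →L[ℝ] E} {G : ℝ × ℝ → E → E}

/-- `y` is a classical (`C¹` up to the boundary) solution of `y_t + A y_x = G(·, y)` on `S`;
points are pairs `(t, x)`. -/
def IsClassicalSol (S : Set (ℝ × ℝ)) (A : ℝ × ℝ → E →L[ℝ] E) (G : ℝ × ℝ → E → E)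
    (y : ℝ × ℝ → E) : Prop :=
  ContDiffOn ℝ 1 y S ∧ ∀ p ∈ S,
    fderivWithin ℝ y S p (1, 0) + A p (fderivWithin ℝ y S p (0, 1)) = G p (y p)

/-- The coefficient `X_x⁻¹ (A - X_t I)` that the change of variables `x ↦ X(t, x)` substitutes
for `A`. -/
def transformedCoeff (X : ℝ × ℝ → ℝ) (S : Set (ℝ × ℝ)) (A : ℝ × ℝ → E →L[ℝ] E) (p : ℝ × ℝ) :
    E →L[ℝ] E :=
  (fderivWithin ℝ X S p (0, 1))⁻¹ •
    (A p - fderivWithin ℝ X S p (1, 0) • ContinuousLinearMap.id ℝ E)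

/-- `(t, x) ↦ (t, X(t, x))` is a `C¹` diffeomorphism of `S` onto `S'` with inverse
`(t, x) ↦ (t, Xb(t, x))`, increasing in the space variable. -/
structure IsSpaceTransform (S S' : Set (ℝ × ℝ)) (X Xb : ℝ × ℝ → ℝ) : Prop where
  uniqueDiffOn : UniqueDiffOn ℝ S
  contDiffOn : ContDiffOn ℝ 1 X S
  contDiffOn_inv : ContDiffOn ℝ 1 Xb S'
  mapsTo : MapsTo (fun p => (p.1, X p)) S S'
  mapsTo_inv : MapsTo (fun p => (p.1, Xb p)) S' S
  left_inv : ∀ p ∈ S, Xb (p.1, X p) = p.2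
  right_inv : ∀ p ∈ S', X (p.1, Xb p) = p.2
  fderivWithin_pos : ∀ p ∈ S, 0 < fderivWithin ℝ X S p (0, 1)

theorem fderivWithin_comp_fst_prodMk {p : ℝ × ℝ} {y : ℝ × ℝ → E}
    (hS : UniqueDiffWithinAt ℝ S p) (hX : DifferentiableWithinAt ℝ X S p)
    (hmaps : MapsTo (fun q => (q.1, X q)) S S')
    (hy : DifferentiableWithinAt ℝ y S' (p.1, X p)) (v : ℝ × ℝ) :
    fderivWithin ℝ (fun q => y (q.1, X q)) S p v =
      v.1 • fderivWithin ℝ y S' (p.1, X p) (1, 0) +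
        fderivWithin ℝ X S p v • fderivWithin ℝ y S' (p.1, X p) (0, 1) := by
  have hΦ : HasFDerivWithinAt (fun q : ℝ × ℝ => (q.1, X q))
      ((ContinuousLinearMap.fst ℝ ℝ ℝ).prod (fderivWithin ℝ X S p)) S p :=
    hasFDerivWithinAt_fst.prodMk hX.hasFDerivWithinAt
  have hchain : HasFDerivWithinAt (fun q => y (q.1, X q))
      ((fderivWithin ℝ y S' (p.1, X p)).comp
        ((ContinuousLinearMap.fst ℝ ℝ ℝ).prod (fderivWithin ℝ X S p))) S p :=
    hy.hasFDerivWithinAt.comp p hΦ hmaps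
  rw [hchain.fderivWithin hS, ← map_smul, ← map_smul, ← map_add]
  simp

theorem fderivWithin_comp_add_transformedCoeff {p : ℝ × ℝ} {y : ℝ × ℝ → E}
    (hS : UniqueDiffWithinAt ℝ S p) (hX : DifferentiableWithinAt ℝ X S p)
    (hmaps : MapsTo (fun q => (q.1, X q)) S S')
    (hy : DifferentiableWithinAt ℝ y S' (p.1, X p)) (hne : fderivWithin ℝ X S p (0, 1) ≠ 0) :
    fderivWithin ℝ (fun q => y (q.1, X q)) S p (1, 0) +
        transformedCoeff X S A p (fderivWithin ℝ (fun q => y (q.1, X q)) S p (0, 1)) =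
      fderivWithin ℝ y S' (p.1, X p) (1, 0) + A p (fderivWithin ℝ y S' (p.1, X p) (0, 1)) := by
  have hscale (c d : ℝ) (w : E) : A p (d • w) - c • d • w = d • (A p w - c • w) := by
    rw [map_smul, smul_sub, smul_comm c d]
  simp only [fderivWithin_comp_fst_prodMk hS hX hmaps hy, transformedCoeff, one_smul, zero_smul,
    zero_add, smul_apply, sub_apply, ContinuousLinearMap.id_apply, hscale, inv_smul_smul₀ hne]
  abel

namespace IsSpaceTransform

theorem contDiffOn_comp (h : IsSpaceTransform S S' X Xb) {y : ℝ × ℝ → E}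
    (hy : ContDiffOn ℝ 1 y S') : ContDiffOn ℝ 1 (fun p => y (p.1, X p)) S :=
  hy.comp (contDiffOn_fst.prodMk h.contDiffOn) h.mapsTo

theorem contDiffOn_comp_inv (h : IsSpaceTransform S S' X Xb) {y : ℝ × ℝ → E}
    (hy : ContDiffOn ℝ 1 y S) : ContDiffOn ℝ 1 (fun p => y (p.1, Xb p)) S' :=
  hy.comp (contDiffOn_fst.prodMk h.contDiffOn_inv) h.mapsTo_inv

theorem fderivWithin_comp_add (h : IsSpaceTransform S S' X Xb) {y : ℝ × ℝ → E}
    (hy : ContDiffOn ℝ 1 y S') {p : ℝ × ℝ} (hp : p ∈ S) :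
    fderivWithin ℝ (fun q => y (q.1, X q)) S p (1, 0) +
        transformedCoeff X S A p (fderivWithin ℝ (fun q => y (q.1, X q)) S p (0, 1)) =
      fderivWithin ℝ y S' (p.1, X p) (1, 0) + A p (fderivWithin ℝ y S' (p.1, X p) (0, 1)) :=
  fderivWithin_comp_add_transformedCoeff (h.uniqueDiffOn p hp)
    (h.contDiffOn.differentiableOn one_ne_zero p hp) h.mapsTo
    (hy.differentiableOn one_ne_zero _ (h.mapsTo hp)) (h.fderivWithin_pos p hp).ne'

theorem isClassicalSol_comp (h : IsSpaceTransform S S' X Xb) {y : ℝ × ℝ → E}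
    (hy : IsClassicalSol S' (fun q => A (q.1, Xb q)) G y) :
    IsClassicalSol S (transformedCoeff X S A) (fun p => G (p.1, X p))
      (fun p => y (p.1, X p)) := by
  refine ⟨h.contDiffOn_comp hy.1, fun p hp => ?_⟩
  have hpde := hy.2 _ (h.mapsTo hp)
  rw [h.fderivWithin_comp_add hy.1 hp]
  simpa only [h.left_inv p hp] using hpde

theorem isClassicalSol_comp_inv (h : IsSpaceTransform S S' X Xb) {y : ℝ × ℝ → E}
    (hy : IsClassicalSol S (transformedCoeff X S A) (fun p => G (p.1, X p)) y) :
    IsClassicalSol S' (fun q => A (q.1, Xb q)) G (fun q => y (q.1, Xb q)) := by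
  have hback : EqOn y (fun p => y (p.1, Xb (p.1, X p))) S := fun p hp => by
    simp only [h.left_inv p hp]
  have hC1 := h.contDiffOn_comp_inv hy.1
  refine ⟨hC1, fun q hq => ?_⟩
  have hp := h.mapsTo_inv hq
  have hpde := hy.2 _ hp
  rw [fderivWithin_congr hback (hback hp), h.fderivWithin_comp_add hC1 hp] at hpde
  simpa only [h.right_inv q hq] using hpde

end IsSpaceTransform

end ChangeOfVariables

section StrictHyperbolicity

/-- `B` has `n + 1` distinct real eigenvalues. -/
def IsStrictlyHyperbolic {n : ℕ} (B : Rd n →L[ℝ] Rd n) : Prop :=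
  ∃ μ : Fin (n + 1) → ℝ, StrictMono μ ∧
    ∃ w : Fin (n + 1) → Rd n, ∀ i, w i ≠ 0 ∧ B (w i) = μ i • w i

theorem IsStrictlyHyperbolic.smul_sub_smul_id {n : ℕ} {B : Rd n →L[ℝ] Rd n}
    (hB : IsStrictlyHyperbolic B) {a : ℝ} (ha : 0 < a) (b : ℝ) :
    IsStrictlyHyperbolic (a • (B - b • ContinuousLinearMap.id ℝ (Rd n))) := by
  obtain ⟨μ, hμ, w, hw⟩ := hB
  refine ⟨fun i => a * (μ i - b), fun i k hik => ?_, w, fun i => ⟨(hw i).1, ?_⟩⟩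
  · exact mul_lt_mul_of_pos_left (sub_lt_sub_right (hμ hik) b) ha
  · simp only [smul_apply, sub_apply, ContinuousLinearMap.id_apply, (hw i).2, ← sub_smul, smul_smul]

theorem IsSpaceTransform.isStrictlyHyperbolic_transformedCoeff {n : ℕ} {S S' : Set (ℝ × ℝ)}
    {X Xb : ℝ × ℝ → ℝ} (h : IsSpaceTransform S S' X Xb) {A : ℝ × ℝ → Rd n →L[ℝ] Rd n}
    {p : ℝ × ℝ} (hp : p ∈ S) (hA : IsStrictlyHyperbolic (A p)) :
    IsStrictlyHyperbolic (transformedCoeff X S A p) :=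
  hA.smul_sub_smul_id (inv_pos.2 (h.fderivWithin_pos p hp)) _

theorem Ctx.IsHyperbolicData.isStrictlyHyperbolic_fderiv {n : ℕ} {C : Ctx n}
    (hC : C.IsHyperbolicData) (y : Rd n) : IsStrictlyHyperbolic (fderiv ℝ C.f y) :=
  ⟨C.lam y, hC.hlamMono y, C.rvec y, fun i =>
    ⟨norm_ne_zero_iff.1 (by rw [hC.hrNorm]; exact one_ne_zero), hC.hEig y i⟩⟩

end StrictHyperbolicity

section Strips

/-- The region `lo(t) ≤ x ≤ hi(t)`, `0 ≤ t ≤ T`, between two graphs over the time axis. -/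
def strip (T : ℝ) (lo hi : ℝ → ℝ) : Set (ℝ × ℝ) :=
  {p | p.1 ∈ Icc 0 T ∧ lo p.1 ≤ p.2 ∧ p.2 ≤ hi p.1}

variable {T : ℝ} {lo hi : ℝ → ℝ}

theorem uniqueDiffOn_strip (hT : 0 < T) (hlo : ConvexOn ℝ (Icc 0 T) lo)
    (hhi : ConcaveOn ℝ (Icc 0 T) hi) (hlt : lo (T / 2) < hi (T / 2)) :
    UniqueDiffOn ℝ (strip T lo hi) := by
  have hconvex : Convex ℝ (strip T lo hi) := by
    convert hlo.convex_epigraph.inter hhi.convex_hypograph using 1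
    ext p
    simp only [strip, mem_ofPred_eq, mem_inter_iff]
    tauto
  have hmid : T / 2 ∈ interior (Icc 0 T) := by
    rw [interior_Icc]
    exact ⟨half_pos hT, half_lt_self hT⟩
  have hloc := hlo.continuousOn_interior.continuousAt (isOpen_interior.mem_nhds hmid)
  have hhic := hhi.continuousOn_interior.continuousAt (isOpen_interior.mem_nhds hmid)
  refine uniqueDiffOn_convex hconvex ⟨(T / 2, (lo (T / 2) + hi (T / 2)) / 2), ?_⟩
  rw [mem_interior_iff_mem_nhds]
  filter_upwards [continuousAt_fst.preimage_mem_nhds (mem_interior_iff_mem_nhds.1 hmid),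
    (hloc.comp_of_eq continuousAt_fst rfl).eventually_lt continuousAt_snd
      (left_lt_add_div_two.2 hlt),
    continuousAt_snd.eventually_lt (hhic.comp_of_eq continuousAt_fst rfl)
      (add_div_two_lt_right.2 hlt)] with p htime hlow hhigh
  exact ⟨htime, hlow.le, hhigh.le⟩

end Strips

section FiberAffine

variable {T : ℝ} {S : Set (ℝ × ℝ)} {ξ η ξa ξb ηa ηb Q Q' : ℝ → ℝ} {X Y Xb : ℝ × ℝ → ℝ}

/-- On the time slice `t`, the affine map of slope `Q(t)` that sends `ξ(t)` to `η(t)`. -/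
def fiberAffine (ξ η Q : ℝ → ℝ) (p : ℝ × ℝ) : ℝ :=
  η p.1 + Q p.1 * (p.2 - ξ p.1)

theorem mapsTo_fiberAffine (hQ : ∀ t ∈ Icc 0 T, 0 < Q t)
    (hgap : ∀ t ∈ Icc 0 T, Q t * (ξb t - ξa t) = ηb t - ηa t) :
    MapsTo (fun p => (p.1, fiberAffine ξa ηa Q p)) (strip T ξa ξb) (strip T ηa ηb) := by
  rintro ⟨t, x⟩ ⟨ht, hlow, hhigh⟩
  refine ⟨ht, le_add_of_nonneg_right (mul_nonneg (hQ t ht).le (sub_nonneg.2 hlow)), ?_⟩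
  calc ηa t + Q t * (x - ξa t) ≤ ηa t + Q t * (ξb t - ξa t) := by
        have := (hQ t ht).le
        gcongr
    _ = ηb t := by rw [hgap t ht, add_sub_cancel]

theorem fiberAffine_fiberAffine_inv {p : ℝ × ℝ} (hQ : Q p.1 ≠ 0) :
    fiberAffine ξ η Q (p.1, fiberAffine η ξ Q⁻¹ p) = p.2 := by
  simp only [fiberAffine, Pi.inv_apply, add_sub_cancel_left, mul_inv_cancel_left₀ hQ,
    add_sub_cancel]

/-- `X` is `C¹` on `S` and its space derivative at `(t, x)` is `Q(t)`. The gradient is prescribed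
through `HasFDerivWithinAt`, so that no uniqueness of derivatives is needed on `S`. -/
def HasSpatialSlopeOn (X : ℝ × ℝ → ℝ) (Q : ℝ → ℝ) (S : Set (ℝ × ℝ)) : Prop :=
  ContinuousOn (fun p : ℝ × ℝ => Q p.1) S ∧ ∃ c : ℝ × ℝ → ℝ, ContinuousOn c S ∧ ∀ p ∈ S,
    HasFDerivWithinAt X
      (c p • ContinuousLinearMap.fst ℝ ℝ ℝ + Q p.1 • ContinuousLinearMap.snd ℝ ℝ ℝ) S p

namespace HasSpatialSlopeOn

theorem congr (h : HasSpatialSlopeOn X Q S) (hXY : EqOn Y X S) : HasSpatialSlopeOn Y Q S :=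
  let ⟨hQ, c, hc, hX⟩ := h
  ⟨hQ, c, hc, fun p hp => (hX p hp).congr hXY (hXY hp)⟩

theorem contDiffOn (h : HasSpatialSlopeOn X Q S) : ContDiffOn ℝ 1 X S := by
  obtain ⟨hQ, c, hc, hX⟩ := h
  rw [← zero_add (1 : WithTop ℕ∞), contDiffOn_succ_iff_hasFDerivWithinAt (by simp)]
  intro p hp
  refine ⟨S, ?_, by simp, _, hX, ?_⟩
  · rw [insert_eq_of_mem hp]
    exact self_mem_nhdsWithin
  · rw [contDiffOn_zero]
    exact (hc.smul continuousOn_const).add (hQ.smul continuousOn_const)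

theorem fderivWithin_snd (h : HasSpatialSlopeOn X Q S) {p : ℝ × ℝ} (hp : p ∈ S)
    (hS : UniqueDiffWithinAt ℝ S p) : fderivWithin ℝ X S p (0, 1) = Q p.1 := by
  obtain ⟨-, c, -, hX⟩ := h
  simp [(hX p hp).fderivWithin hS]

end HasSpatialSlopeOn

theorem isSpaceTransform_of_fiberAffine (hS : UniqueDiffOn ℝ (strip T ξa ξb))
    (hQ : ∀ t ∈ Icc 0 T, 0 < Q t) (hgap : ∀ t ∈ Icc 0 T, Q t * (ξb t - ξa t) = ηb t - ηa t)
    (hX : EqOn X (fiberAffine ξa ηa Q) (strip T ξa ξb))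
    (hXb : EqOn Xb (fiberAffine ηa ξa Q⁻¹) (strip T ηa ηb))
    (hslope : HasSpatialSlopeOn (fiberAffine ξa ηa Q) Q (strip T ξa ξb))
    (hslope_inv : HasSpatialSlopeOn (fiberAffine ηa ξa Q⁻¹) Q⁻¹ (strip T ηa ηb)) :
    IsSpaceTransform (strip T ξa ξb) (strip T ηa ηb) X Xb := by
  have hgap_inv : ∀ t ∈ Icc 0 T, Q⁻¹ t * (ηb t - ηa t) = ξb t - ξa t := fun t ht => by
    rw [← hgap t ht, Pi.inv_apply, inv_mul_cancel_left₀ (hQ t ht).ne']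
  have hmaps : MapsTo (fun p => (p.1, X p)) (strip T ξa ξb) (strip T ηa ηb) :=
    (mapsTo_fiberAffine hQ hgap).congr fun p hp => by simp only [hX hp]
  have hmaps_inv : MapsTo (fun p => (p.1, Xb p)) (strip T ηa ηb) (strip T ξa ξb) :=
    (mapsTo_fiberAffine (Q := Q⁻¹) (fun t ht => inv_pos.2 (hQ t ht)) hgap_inv).congr
      fun p hp => by simp only [hXb hp]
  refine ⟨hS, (hslope.congr hX).contDiffOn, (hslope_inv.congr hXb).contDiffOn, hmaps, hmaps_inv,
    fun p hp => ?_, fun p hp => ?_, fun p hp => ?_⟩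
  · rw [show Xb (p.1, X p) = _ from hXb (hmaps hp), hX hp]
    simpa only [inv_inv] using fiberAffine_fiberAffine_inv (ξ := ηa) (η := ξa) (Q := Q⁻¹)
      (inv_ne_zero (hQ p.1 hp.1).ne')
  · rw [show X (p.1, Xb p) = _ from hX (hmaps_inv hp), hXb hp]
    exact fiberAffine_fiberAffine_inv (hQ p.1 hp.1).ne'
  · rw [(hslope.congr hX).fderivWithin_snd hp (hS p hp)]
    exact hQ p.1 hp.1

open scoped Topology in
theorem hasFDerivWithinAt_smul_of_eq_zero {𝕜 F F' : Type*} [NontriviallyNormedField 𝕜]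
    [NormedAddCommGroup F] [NormedSpace 𝕜 F] [NormedAddCommGroup F'] [NormedSpace 𝕜 F']
    {h : F → 𝕜} {w : F → F'} {w' : F →L[𝕜] F'} {s : Set F} {p : F}
    (hh : ContinuousWithinAt h s p) (hw : HasFDerivWithinAt w w' s p) (hp : w p = 0) :
    HasFDerivWithinAt (fun q => h q • w q) (h p • w') s p := by
  have hsmall : (fun q => h q - h p) =o[𝓝[s] p] fun _ => (1 : 𝕜) := by
    rw [Asymptotics.isLittleO_one_iff]
    exact tendsto_sub_nhds_zero_iff.2 hh
  have hbig : w =O[𝓝[s] p] fun q => q - p := by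
    simpa only [hp, sub_zero] using hw.isBigO_sub
  have hrem : HasFDerivWithinAt (fun q => (h q - h p) • w q) (0 : F →L[𝕜] F') s p := by
    rw [hasFDerivWithinAt_iff_isLittleO]
    simpa [hp] using (hsmall.smul_isBigO hbig)
  convert hrem.add (hw.const_smul (h p)) using 1
  · ext q
    simp [sub_smul]
  · rw [zero_add]

/-- `Q` need only be differentiable at the times where the strip has points off the graph of `ξ`;
this covers the vertex of a wedge. -/
theorem hasSpatialSlopeOn_fiberAffine (hT : 0 < T) (hS : ∀ p ∈ S, p.1 ∈ Icc 0 T)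
    (hξ : ContDiffOn ℝ 1 ξ (Icc 0 T)) (hη : ContDiffOn ℝ 1 η (Icc 0 T))
    (hQ : ContinuousOn Q (Icc 0 T))
    (hQ' : ∀ p ∈ S, p.2 ≠ ξ p.1 → HasDerivWithinAt Q (Q' p.1) (Icc 0 T) p.1)
    (hcont : ContinuousOn (fun p : ℝ × ℝ => Q' p.1 * (p.2 - ξ p.1)) S) :
    HasSpatialSlopeOn (fiberAffine ξ η Q) Q S := by
  have hderiv {c : ℝ → ℝ} {c' : ℝ} {p : ℝ × ℝ} (hc : HasDerivWithinAt c c' (Icc 0 T) p.1) :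
      HasFDerivWithinAt (fun q : ℝ × ℝ => c q.1) (c' • ContinuousLinearMap.fst ℝ ℝ ℝ) S p :=
    hc.comp_hasFDerivWithinAt p hasFDerivWithinAt_fst hS
  have hcurve {c : ℝ → ℝ} (hc : ContDiffOn ℝ 1 c (Icc 0 T)) {p : ℝ × ℝ} (hp : p ∈ S) :=
    hderiv (hc.differentiableOn one_ne_zero p.1 (hS p hp)).hasDerivWithinAt
  have hcurve_cont {c : ℝ → ℝ} (hc : ContDiffOn ℝ 1 c (Icc 0 T)) :
      ContinuousOn (fun p : ℝ × ℝ => derivWithin c (Icc 0 T) p.1) S :=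
    (hc.continuousOn_derivWithin (uniqueDiffOn_Icc hT) le_rfl).comp continuousOn_fst hS
  have hQc : ContinuousOn (fun p : ℝ × ℝ => Q p.1) S := hQ.comp continuousOn_fst hS
  refine ⟨hQc, fun p => derivWithin η (Icc 0 T) p.1 - Q p.1 * derivWithin ξ (Icc 0 T) p.1 +
    Q' p.1 * (p.2 - ξ p.1), ((hcurve_cont hη).sub (hQc.mul (hcurve_cont hξ))).add hcont,
    fun p hp => ?_⟩
  have hw := (hasFDerivWithinAt_snd (𝕜 := ℝ) (p := p) (s := S)).sub (hcurve hξ hp)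
  by_cases hp0 : p.2 = ξ p.1
  · refine ((hcurve hη hp).add (hasFDerivWithinAt_smul_of_eq_zero (hQc p hp) hw
      (sub_eq_zero.2 hp0))).congr_fderiv ?_
    ext <;> simp [hp0]
    ring
  · refine ((hcurve hη hp).add ((hderiv (hQ' p hp hp0)).mul hw)).congr_fderiv ?_
    ext <;> simp
    ring

end FiberAffine

section LinearInterpolation

variable {T : ℝ} {ξa ξb ηa ηb Q : ℝ → ℝ}

/-- The affine function of `x` with value `u` at `a` and `v` at `b`. -/
def linInterp (a b u v x : ℝ) : ℝ :=
  ((x - a) * v + (b - x) * u) / (b - a)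

theorem linInterp_eq_fiberAffine {p : ℝ × ℝ} (hne : ξa p.1 ≠ ξb p.1)
    (hgap : Q p.1 * (ξb p.1 - ξa p.1) = ηb p.1 - ηa p.1) :
    linInterp (ξa p.1) (ξb p.1) (ηa p.1) (ηb p.1) p.2 = fiberAffine ξa ηa Q p := by
  have hv : ηb p.1 = ηa p.1 + Q p.1 * (ξb p.1 - ξa p.1) := by rw [hgap, add_sub_cancel]
  have hne' : ξb p.1 - ξa p.1 ≠ 0 := sub_ne_zero.2 hne.symm
  rw [linInterp, hv, fiberAffine]
  field_simp
  ring

theorem hasSpatialSlopeOn_fiberAffine_of_contDiffOn {ξ η lo hi : ℝ → ℝ} (hT : 0 < T)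
    (hξ : ContDiffOn ℝ 1 ξ (Icc 0 T)) (hη : ContDiffOn ℝ 1 η (Icc 0 T))
    (hQ : ContDiffOn ℝ 1 Q (Icc 0 T)) :
    HasSpatialSlopeOn (fiberAffine ξ η Q) Q (strip T lo hi) := by
  have htime : ∀ p ∈ strip T lo hi, p.1 ∈ Icc 0 T := fun p hp => hp.1
  refine hasSpatialSlopeOn_fiberAffine hT htime hξ hη hQ.continuousOn
    (fun p hp _ => (hQ.differentiableOn one_ne_zero p.1 hp.1).hasDerivWithinAt) ?_
  exact ((hQ.continuousOn_derivWithin (uniqueDiffOn_Icc hT) le_rfl).comp continuousOn_fst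
    htime).mul (continuousOn_snd.sub (hξ.continuousOn.comp continuousOn_fst htime))

theorem isSpaceTransform_linInterp (hT : 0 < T) (hconvex : ConvexOn ℝ (Icc 0 T) ξa)
    (hconcave : ConcaveOn ℝ (Icc 0 T) ξb) (hξa : ContDiffOn ℝ 1 ξa (Icc 0 T))
    (hξb : ContDiffOn ℝ 1 ξb (Icc 0 T)) (hηa : ContDiffOn ℝ 1 ηa (Icc 0 T))
    (hηb : ContDiffOn ℝ 1 ηb (Icc 0 T)) (hξ : ∀ t ∈ Icc 0 T, ξa t < ξb t)
    (hη : ∀ t ∈ Icc 0 T, ηa t < ηb t) :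
    IsSpaceTransform (strip T ξa ξb) (strip T ηa ηb)
      (fun p => linInterp (ξa p.1) (ξb p.1) (ηa p.1) (ηb p.1) p.2)
      (fun p => linInterp (ηa p.1) (ηb p.1) (ξa p.1) (ξb p.1) p.2) := by
  have hξ' : ∀ t ∈ Icc 0 T, 0 < (ξb - ξa) t := fun t ht => sub_pos.2 (hξ t ht)
  have hη' : ∀ t ∈ Icc 0 T, 0 < (ηb - ηa) t := fun t ht => sub_pos.2 (hη t ht)
  have hQ : ContDiffOn ℝ 1 ((ηb - ηa) / (ξb - ξa)) (Icc 0 T) :=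
    (hηb.sub hηa).div (hξb.sub hξa) fun t ht => (hξ' t ht).ne'
  have hQ_inv : ContDiffOn ℝ 1 ((ηb - ηa) / (ξb - ξa))⁻¹ (Icc 0 T) := by
    rw [inv_div]
    exact (hξb.sub hξa).div (hηb.sub hηa) fun t ht => (hη' t ht).ne'
  have hgap : ∀ t ∈ Icc 0 T, ((ηb - ηa) / (ξb - ξa)) t * (ξb t - ξa t) = ηb t - ηa t :=
    fun t ht => div_mul_cancel₀ _ (hξ' t ht).ne'
  have hgap_inv : ∀ t ∈ Icc 0 T, ((ηb - ηa) / (ξb - ξa))⁻¹ t * (ηb t - ηa t) = ξb t - ξa t :=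
    fun t ht => by
      rw [inv_div]
      exact div_mul_cancel₀ _ (hη' t ht).ne'
  have hmid : T / 2 ∈ Icc 0 T := ⟨(half_pos hT).le, half_le_self hT.le⟩
  exact isSpaceTransform_of_fiberAffine (uniqueDiffOn_strip hT hconvex hconcave (hξ _ hmid))
    (fun t ht => div_pos (hη' t ht) (hξ' t ht)) hgap
    (fun p hp => linInterp_eq_fiberAffine (hξ p.1 hp.1).ne (hgap p.1 hp.1))
    (fun p hp => linInterp_eq_fiberAffine (hη p.1 hp.1).ne (hgap_inv p.1 hp.1))
    (hasSpatialSlopeOn_fiberAffine_of_contDiffOn hT hξa hηa hQ)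
    (hasSpatialSlopeOn_fiberAffine_of_contDiffOn hT hηa hξa hQ_inv)

end LinearInterpolation

section RunningMean

variable {T : ℝ} {Λ Λ' : ℝ → ℝ}

/-- The mean of `Λ` over `[0, t]`, extended by `Λ 0` to `t = 0`. -/
def runningMean (Λ : ℝ → ℝ) (t : ℝ) : ℝ :=
  ∫ u in (0 : ℝ)..1, Λ (u * t)

theorem mul_runningMean (Λ : ℝ → ℝ) (t : ℝ) : t * runningMean Λ t = ∫ τ in (0 : ℝ)..t, Λ τ := by
  simp [runningMean]

theorem runningMean_zero (Λ : ℝ → ℝ) : runningMean Λ 0 = Λ 0 := by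
  simp [runningMean]

theorem continuous_runningMean (hΛ : Continuous Λ) : Continuous (runningMean Λ) := by
  unfold runningMean
  apply intervalIntegral.continuous_parametric_intervalIntegral_of_continuous'
  fun_prop

theorem runningMean_pos (hΛ : Continuous Λ) (hpos : ∀ t, 0 < Λ t) (t : ℝ) :
    0 < runningMean Λ t :=
  intervalIntegral_pos_of_pos
    (Continuous.intervalIntegrable (hΛ.comp (by fun_prop)) _ _) (fun _ => hpos _) one_pos

/-- `k` is a continuous extension, vanishing at `0`, of the Euler derivative `t ↦ t h'(t)` of the
continuous function `h` on `t > 0`. Such an `h` may fail to be differentiable at `0`. -/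
structure HasEulerDeriv (h k : ℝ → ℝ) : Prop where
  continuous : Continuous h
  continuous_deriv : Continuous k
  deriv_zero : k 0 = 0
  hasDerivAt : ∀ t > 0, HasDerivAt h (k t / t) t

theorem HasEulerDeriv.div {h₁ k₁ h₂ k₂ : ℝ → ℝ} (H₁ : HasEulerDeriv h₁ k₁)
    (H₂ : HasEulerDeriv h₂ k₂) (hne : ∀ t, h₂ t ≠ 0) :
    HasEulerDeriv (h₁ / h₂) ((k₁ * h₂ - h₁ * k₂) / h₂ ^ 2) where
  continuous := H₁.continuous.div H₂.continuous hne
  continuous_deriv := ((H₁.continuous_deriv.mul H₂.continuous).sub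
    (H₁.continuous.mul H₂.continuous_deriv)).div (H₂.continuous.pow 2) fun t =>
      pow_ne_zero 2 (hne t)
  deriv_zero := by simp [H₁.deriv_zero, H₂.deriv_zero]
  hasDerivAt t ht := by
    refine ((H₁.hasDerivAt t ht).div (H₂.hasDerivAt t ht) (hne t)).congr_deriv ?_
    simp only [Pi.div_apply, Pi.sub_apply, Pi.mul_apply, Pi.pow_apply]
    ring

theorem hasEulerDeriv_runningMean (hΛ : Continuous Λ) :
    HasEulerDeriv (runningMean Λ) (Λ - runningMean Λ) where
  continuous := continuous_runningMean hΛ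
  continuous_deriv := hΛ.sub (continuous_runningMean hΛ)
  deriv_zero := by simp [runningMean_zero]
  hasDerivAt t ht := by
    have hquot : runningMean Λ =ᶠ[nhds t] fun s => (∫ τ in (0 : ℝ)..s, Λ τ) / s := by
      filter_upwards [lt_mem_nhds ht] with s hs
      rw [← mul_runningMean, mul_div_cancel_left₀ _ hs.ne']
    refine (((hΛ.integral_hasStrictDerivAt 0 t).hasDerivAt.div (hasDerivAt_id' t)
      ht.ne').congr_of_eventuallyEq hquot).congr_deriv ?_
    rw [← mul_runningMean, Pi.sub_apply]
    field_simp

/-- The curve `ξ` starts at `u₀` and travels with the continuous speed `Λ` during `[0, T]`. -/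
structure IsCurveOfSpeed (T u₀ : ℝ) (Λ ξ : ℝ → ℝ) : Prop where
  continuous_speed : Continuous Λ
  eq_integral : ∀ t ∈ Icc 0 T, ξ t = u₀ + ∫ τ in (0 : ℝ)..t, Λ τ

namespace IsCurveOfSpeed

variable {u₀ : ℝ} {ξ ξ' : ℝ → ℝ}

theorem contDiffOn (h : IsCurveOfSpeed T u₀ Λ ξ) : ContDiffOn ℝ 1 ξ (Icc 0 T) := by
  have hderiv (t : ℝ) : HasDerivAt (fun t => ∫ τ in (0 : ℝ)..t, Λ τ) (Λ t) t :=
    (h.continuous_speed.integral_hasStrictDerivAt 0 t).hasDerivAt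
  have hC1 : ContDiff ℝ 1 fun t => ∫ τ in (0 : ℝ)..t, Λ τ := by
    rw [contDiff_one_iff_deriv, funext fun t => (hderiv t).deriv]
    exact ⟨fun t => (hderiv t).differentiableAt, h.continuous_speed⟩
  exact (contDiff_const.add hC1).contDiffOn.congr h.eq_integral

theorem apply_zero (h : IsCurveOfSpeed T u₀ Λ ξ) (hT : 0 ≤ T) : ξ 0 = u₀ := by
  rw [h.eq_integral 0 ⟨le_rfl, hT⟩, integral_same, add_zero]

theorem sub_eq (h : IsCurveOfSpeed T u₀ Λ ξ) (h' : IsCurveOfSpeed T u₀ Λ' ξ') {t : ℝ}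
    (ht : t ∈ Icc 0 T) : ξ' t - ξ t = t * runningMean (Λ' - Λ) t := by
  rw [h.eq_integral t ht, h'.eq_integral t ht, mul_runningMean, add_sub_add_left_eq_sub,
    ← integral_sub (h'.continuous_speed.intervalIntegrable _ _)
      (h.continuous_speed.intervalIntegrable _ _)]
  rfl

theorem of_continuousOn {f : ℝ → ℝ} (hT : 0 ≤ T) (hf : ContinuousOn f (Icc 0 T))
    (hξ : ∀ t ∈ Icc 0 T, ξ t = u₀ + ∫ τ in (0 : ℝ)..t, f τ) :
    IsCurveOfSpeed T u₀ (fun t => f (projIcc 0 T hT t)) ξ := by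
  refine ⟨hf.comp_continuous (continuous_subtype_val.comp continuous_projIcc)
    fun t => (projIcc 0 T hT t).2, fun t ht => (hξ t ht).trans ?_⟩
  refine congrArg (u₀ + ·) (integral_congr fun τ hτ => ?_)
  rw [uIcc_of_le ht.1] at hτ
  simp only [projIcc_of_mem hT (Icc_subset_Icc_right ht.2 hτ)]

theorem const_mul {s : ℝ} : IsCurveOfSpeed T 0 (fun _ => s) fun t => s * t :=
  ⟨continuous_const, fun t _ => by simp [mul_comm]⟩

end IsCurveOfSpeed

end RunningMean

section Wedge

variable {T u₀ v₀ : ℝ} {S : Set (ℝ × ℝ)} {h k M Q ξ η hi ξa ξb ηa ηb Λa Λb Κa Κb : ℝ → ℝ}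

theorem HasEulerDeriv.continuousOn_div_mul {w : ℝ × ℝ → ℝ} (H : HasEulerDeriv h k)
    (hM : Continuous M) (hw : ContinuousOn w S)
    (hbound : ∀ p ∈ S, |w p| ≤ p.1 * M p.1) :
    ContinuousOn (fun p : ℝ × ℝ => k p.1 / p.1 * w p) S := by
  have hkc := H.continuous_deriv
  intro p hp
  rcases eq_or_ne p.1 0 with hp0 | hp0
  · have hlim : Filter.Tendsto (fun q : ℝ × ℝ => |k q.1| * |M q.1|) (nhdsWithin p S)
        (nhds 0) := by
      have hcont : Continuous fun q : ℝ × ℝ => |k q.1| * |M q.1| := by fun_prop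
      simpa [ContinuousWithinAt, hp0, H.deriv_zero] using
        hcont.continuousWithinAt (s := S) (x := p)
    rw [ContinuousWithinAt, hp0, div_zero, zero_mul]
    refine squeeze_zero_norm' ?_ hlim
    filter_upwards [self_mem_nhdsWithin] with q hq
    rw [Real.norm_eq_abs, div_mul_eq_mul_div, mul_div_assoc, abs_mul, abs_div]
    refine mul_le_mul_of_nonneg_left (div_le_of_le_mul₀ (abs_nonneg _) (abs_nonneg _) ?_)
      (abs_nonneg _)
    rw [← abs_mul, mul_comm]
    exact (hbound q hq).trans (le_abs_self _)
  · exact ((hkc.continuousAt.comp continuousAt_fst).div continuousAt_fst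
      hp0).continuousWithinAt.mul (hw p hp)

theorem hasSpatialSlopeOn_fiberAffine_of_hasEulerDeriv (hT : 0 < T) (hQ : HasEulerDeriv Q k)
    (hξ : ContDiffOn ℝ 1 ξ (Icc 0 T)) (hη : ContDiffOn ℝ 1 η (Icc 0 T)) (hM : Continuous M)
    (hwidth : ∀ t ∈ Icc 0 T, hi t - ξ t = t * M t) :
    HasSpatialSlopeOn (fiberAffine ξ η Q) Q (strip T ξ hi) := by
  have htime : ∀ p ∈ strip T ξ hi, p.1 ∈ Icc 0 T := fun p hp => hp.1
  have hbound : ∀ p ∈ strip T ξ hi, |p.2 - ξ p.1| ≤ p.1 * M p.1 := fun p hp => by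
    rw [abs_of_nonneg (sub_nonneg.2 hp.2.1), ← hwidth p.1 hp.1]
    exact sub_le_sub_right hp.2.2 _
  refine hasSpatialSlopeOn_fiberAffine (Q' := fun t => k t / t) hT htime hξ hη
    hQ.continuous.continuousOn (fun p hp hoff => ?_)
    (hQ.continuousOn_div_mul (w := fun p => p.2 - ξ p.1) hM
      (continuousOn_snd.sub (hξ.continuousOn.comp continuousOn_fst htime)) hbound)
  have hpos : 0 < p.1 := hp.1.1.lt_of_ne' fun hp0 => hoff <| by
    have := hbound p hp
    rw [hp0, zero_mul] at this
    rw [hp0]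
    exact sub_eq_zero.1 (abs_nonpos_iff.1 this)
  exact (hQ.hasDerivAt p.1 hpos).hasDerivWithinAt

namespace IsCurveOfSpeed

theorem runningMean_sub_pos (hξa : IsCurveOfSpeed T u₀ Λa ξa) (hξb : IsCurveOfSpeed T u₀ Λb ξb)
    (hΛ : ∀ t, Λa t < Λb t) (t : ℝ) : 0 < runningMean (Λb - Λa) t :=
  runningMean_pos (hξb.continuous_speed.sub hξa.continuous_speed) (fun t => sub_pos.2 (hΛ t)) t

theorem lt (hξa : IsCurveOfSpeed T u₀ Λa ξa) (hξb : IsCurveOfSpeed T u₀ Λb ξb)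
    (hΛ : ∀ t, Λa t < Λb t) {t : ℝ} (ht : t ∈ Icc 0 T) (ht0 : t ≠ 0) : ξa t < ξb t := by
  rw [← sub_pos, hξa.sub_eq hξb ht]
  exact mul_pos (ht.1.lt_of_ne' ht0) (hξa.runningMean_sub_pos hξb hΛ t)

end IsCurveOfSpeed

/-- The space slope of the interpolation between two wedges whose edges travel with the speeds
`Λa < Λb` and `Κa < Κb`: the quotient of the mean speed gaps, which unlike the quotient of the
widths makes sense at the vertex. -/
def wedgeSlope (Λa Λb Κa Κb : ℝ → ℝ) : ℝ → ℝ :=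
  runningMean (Κb - Κa) / runningMean (Λb - Λa)

theorem wedgeSlope_inv : (wedgeSlope Λa Λb Κa Κb)⁻¹ = wedgeSlope Κa Κb Λa Λb :=
  inv_div _ _

theorem wedgeSlope_mul_sub (hξa : IsCurveOfSpeed T u₀ Λa ξa) (hξb : IsCurveOfSpeed T u₀ Λb ξb)
    (hηa : IsCurveOfSpeed T v₀ Κa ηa) (hηb : IsCurveOfSpeed T v₀ Κb ηb)
    (hΛ : ∀ t, Λa t < Λb t) {t : ℝ} (ht : t ∈ Icc 0 T) :
    wedgeSlope Λa Λb Κa Κb t * (ξb t - ξa t) = ηb t - ηa t := by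
  rw [hξa.sub_eq hξb ht, hηa.sub_eq hηb ht, wedgeSlope, Pi.div_apply, mul_left_comm,
    div_mul_cancel₀ _ (hξa.runningMean_sub_pos hξb hΛ t).ne']

theorem eqOn_ite_linInterp_fiberAffine (hξa : IsCurveOfSpeed T u₀ Λa ξa)
    (hξb : IsCurveOfSpeed T u₀ Λb ξb) (hηa : IsCurveOfSpeed T v₀ Κa ηa)
    (hηb : IsCurveOfSpeed T v₀ Κb ηb) (hΛ : ∀ t, Λa t < Λb t) :
    EqOn (fun p => if p.1 = 0 then v₀ else linInterp (ξa p.1) (ξb p.1) (ηa p.1) (ηb p.1) p.2)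
      (fiberAffine ξa ηa (wedgeSlope Λa Λb Κa Κb)) (strip T ξa ξb) := by
  rintro ⟨t, x⟩ ⟨ht, hlow, hhigh⟩
  dsimp only at ht hlow hhigh ⊢
  split_ifs with ht0
  · subst ht0
    have hT : 0 ≤ T := ht.2
    rw [hξa.apply_zero hT] at hlow
    rw [hξb.apply_zero hT] at hhigh
    simp [fiberAffine, hξa.apply_zero hT, hηa.apply_zero hT, le_antisymm hhigh hlow]
  · exact linInterp_eq_fiberAffine (p := (t, x)) (hξa.lt hξb hΛ ht ht0).ne
      (wedgeSlope_mul_sub hξa hξb hηa hηb hΛ ht)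

theorem hasSpatialSlopeOn_wedgeSlope (hT : 0 < T) (hξa : IsCurveOfSpeed T u₀ Λa ξa)
    (hξb : IsCurveOfSpeed T u₀ Λb ξb) (hηa : IsCurveOfSpeed T v₀ Κa ηa)
    (hΚb : Continuous Κb) (hΛ : ∀ t, Λa t < Λb t) :
    HasSpatialSlopeOn (fiberAffine ξa ηa (wedgeSlope Λa Λb Κa Κb)) (wedgeSlope Λa Λb Κa Κb)
      (strip T ξa ξb) := by
  have hgap := hξb.continuous_speed.sub hξa.continuous_speed
  have hgap' := hΚb.sub hηa.continuous_speed
  exact hasSpatialSlopeOn_fiberAffine_of_hasEulerDeriv hT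
    ((hasEulerDeriv_runningMean hgap').div (hasEulerDeriv_runningMean hgap) fun t =>
      (hξa.runningMean_sub_pos hξb hΛ t).ne')
    hξa.contDiffOn hηa.contDiffOn (continuous_runningMean hgap) fun t => hξa.sub_eq hξb

theorem isSpaceTransform_wedge (hT : 0 < T) (hconvex : ConvexOn ℝ (Icc 0 T) ξa)
    (hconcave : ConcaveOn ℝ (Icc 0 T) ξb) (hξa : IsCurveOfSpeed T u₀ Λa ξa)
    (hξb : IsCurveOfSpeed T u₀ Λb ξb) (hηa : IsCurveOfSpeed T v₀ Κa ηa)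
    (hηb : IsCurveOfSpeed T v₀ Κb ηb) (hΛ : ∀ t, Λa t < Λb t) (hΚ : ∀ t, Κa t < Κb t) :
    IsSpaceTransform (strip T ξa ξb) (strip T ηa ηb)
      (fun p => if p.1 = 0 then v₀ else linInterp (ξa p.1) (ξb p.1) (ηa p.1) (ηb p.1) p.2)
      (fun p => if p.1 = 0 then u₀ else linInterp (ηa p.1) (ηb p.1) (ξa p.1) (ξb p.1) p.2) := by
  have hmid := hξa.lt hξb hΛ ⟨(half_pos hT).le, half_le_self hT.le⟩ (half_pos hT).ne'
  have hpos (t : ℝ) : 0 < wedgeSlope Λa Λb Κa Κb t :=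
    div_pos (hηa.runningMean_sub_pos hηb hΚ t) (hξa.runningMean_sub_pos hξb hΛ t)
  refine isSpaceTransform_of_fiberAffine (uniqueDiffOn_strip hT hconvex hconcave hmid)
    (fun t _ => hpos t) (fun t => wedgeSlope_mul_sub hξa hξb hηa hηb hΛ)
    (eqOn_ite_linInterp_fiberAffine hξa hξb hηa hηb hΛ) ?_
    (hasSpatialSlopeOn_wedgeSlope hT hξa hξb hηa hηb.continuous_speed hΛ) ?_
  · rw [wedgeSlope_inv]
    exact eqOn_ite_linInterp_fiberAffine hηa hηb hξa hξb hΚ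
  · rw [wedgeSlope_inv]
    exact hasSpatialSlopeOn_wedgeSlope hT hηa hηb hξa hξb.continuous_speed hΚ

end Wedge

namespace Ctx

variable {n : ℕ} {C : Ctx n} {x₀ : ℝ} {zbar : Comp n}

section SectorShapes

theorem sector_zero :
    C.sector 0 = strip C.T (fun t => -C.ℓ + C.lmax * t) (fun t => C.s 0 * t) :=
  rfl

theorem sector_last :
    C.sector (Fin.last (n + 1)) =
      strip C.T (fun t => C.s (Fin.last n) * t) (fun t => C.ℓ - C.lmax * t) := by
  ext p
  simp [sector, strip, Fin.last]

theorem sector_mid (i : Fin n) :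
    C.sector i.succ.castSucc =
      strip C.T (fun t => C.s i.castSucc * t) (fun t => C.s i.succ * t) := by
  have hi : (i : ℕ) ≠ n := i.isLt.ne
  ext p
  simp [sector, strip, hi, Fin.castSucc, Fin.castAdd, Fin.castLE, Fin.succ]

theorem physSector_zero :
    C.physSector x₀ zbar 0 = strip C.T (C.xiL zbar) (C.xiS x₀ zbar 0) :=
  rfl

theorem physSector_last :
    C.physSector x₀ zbar (Fin.last (n + 1)) =
      strip C.T (C.xiS x₀ zbar (Fin.last n)) (C.xiR zbar) := by
  ext p
  simp [physSector, strip, Fin.last]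

theorem physSector_mid (i : Fin n) :
    C.physSector x₀ zbar i.succ.castSucc =
      strip C.T (C.xiS x₀ zbar i.castSucc) (C.xiS x₀ zbar i.succ) := by
  have hi : (i : ℕ) ≠ n := i.isLt.ne
  ext p
  simp [physSector, strip, hi, Fin.castSucc, Fin.castAdd, Fin.castLE, Fin.succ]

theorem xTrafo_zero :
    C.xTrafo x₀ zbar 0 = fun p => linInterp (-C.ℓ + C.lmax * p.1) (C.s 0 * p.1)
      (C.xiL zbar p.1) (C.xiS x₀ zbar 0 p.1) p.2 :=
  rfl

theorem xTrafo_last :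
    C.xTrafo x₀ zbar (Fin.last (n + 1)) = fun p =>
      linInterp (C.s (Fin.last n) * p.1) (C.ℓ - C.lmax * p.1)
        (C.xiS x₀ zbar (Fin.last n) p.1) (C.xiR zbar p.1) p.2 := by
  ext p
  simp [xTrafo, linInterp]

theorem xTrafo_mid (i : Fin n) :
    C.xTrafo x₀ zbar i.succ.castSucc = fun p => if p.1 = 0 then x₀ else
      linInterp (C.s i.castSucc * p.1) (C.s i.succ * p.1)
        (C.xiS x₀ zbar i.castSucc p.1) (C.xiS x₀ zbar i.succ p.1) p.2 := by
  have hi : (i : ℕ) ≠ n := i.isLt.ne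
  ext p
  simp [xTrafo, linInterp, hi, Fin.castSucc, Fin.castAdd, Fin.castLE, Fin.succ, sub_mul]

theorem xbarTrafo_zero :
    C.xbarTrafo x₀ zbar 0 = fun p => linInterp (C.xiL zbar p.1) (C.xiS x₀ zbar 0 p.1)
      (-C.ℓ + C.lmax * p.1) (C.s 0 * p.1) p.2 :=
  rfl

theorem xbarTrafo_last :
    C.xbarTrafo x₀ zbar (Fin.last (n + 1)) = fun p =>
      linInterp (C.xiS x₀ zbar (Fin.last n) p.1) (C.xiR zbar p.1)
        (C.s (Fin.last n) * p.1) (C.ℓ - C.lmax * p.1) p.2 := by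
  ext p
  simp [xbarTrafo, linInterp]

theorem xbarTrafo_mid (i : Fin n) :
    C.xbarTrafo x₀ zbar i.succ.castSucc = fun p => if p.1 = 0 then 0 else
      linInterp (C.xiS x₀ zbar i.castSucc p.1) (C.xiS x₀ zbar i.succ p.1)
        (C.s i.castSucc * p.1) (C.s i.succ * p.1) p.2 := by
  have hi : (i : ℕ) ≠ n := i.isLt.ne
  ext p
  simp [xbarTrafo, linInterp, hi, Fin.castSucc, Fin.castAdd, Fin.castLE, Fin.succ]

end SectorShapes

section BoundaryCurves

theorem IsHyperbolicData.abs_s_mul_le (hC : C.IsHyperbolicData) (k : Fin (n + 1)) {t : ℝ}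
    (ht : t ∈ Icc 0 C.T) : |C.s k * t| ≤ C.lmax * C.T := by
  rw [abs_mul, abs_of_nonneg ht.1]
  exact mul_le_mul (hC.hsBound k) ht.2 ht.1 hC.hlmax.le

theorem left_lt_shock (hC : C.IsHyperbolicData) (hroom : 2 * (C.lmax * C.T) < C.ℓ)
    (k : Fin (n + 1)) {t : ℝ} (ht : t ∈ Icc 0 C.T) : -C.ℓ + C.lmax * t < C.s k * t := by
  have hshock := abs_le.1 (hC.abs_s_mul_le k ht)
  have hmax := mul_le_mul_of_nonneg_left ht.2 hC.hlmax.le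
  linarith

theorem shock_lt_right (hC : C.IsHyperbolicData) (hroom : 2 * (C.lmax * C.T) < C.ℓ)
    (k : Fin (n + 1)) {t : ℝ} (ht : t ∈ Icc 0 C.T) : C.s k * t < C.ℓ - C.lmax * t := by
  have hshock := abs_le.1 (hC.abs_s_mul_le k ht)
  have hmax := mul_le_mul_of_nonneg_left ht.2 hC.hlmax.le
  linarith

theorem shock_mem_sector_castSucc (hC : C.IsHyperbolicData) (hroom : 2 * (C.lmax * C.T) < C.ℓ)
    (k : Fin (n + 1)) {t : ℝ} (ht : t ∈ Icc 0 C.T) : (t, C.s k * t) ∈ C.sector k.castSucc := by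
  cases k using Fin.cases with
  | zero => exact ⟨ht, (left_lt_shock hC hroom 0 ht).le, le_rfl⟩
  | succ i =>
    rw [sector_mid]
    exact ⟨ht, mul_le_mul_of_nonneg_right (hC.hsMono i.castSucc_lt_succ).le ht.1, le_rfl⟩

theorem shock_mem_sector_succ (hC : C.IsHyperbolicData) (hroom : 2 * (C.lmax * C.T) < C.ℓ)
    (k : Fin (n + 1)) {t : ℝ} (ht : t ∈ Icc 0 C.T) : (t, C.s k * t) ∈ C.sector k.succ := by
  cases k using Fin.lastCases with
  | last =>
    rw [Fin.succ_last, sector_last]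
    exact ⟨ht, le_rfl, (shock_lt_right hC hroom _ ht).le⟩
  | cast i =>
    rw [Fin.succ_castSucc, sector_mid]
    exact ⟨ht, le_rfl, mul_le_mul_of_nonneg_right (hC.hsMono i.castSucc_lt_succ).le ht.1⟩

theorem continuousOn_comp_ray (hz : C.IsPC0 zbar) {j : Fin (n + 2)} {r : ℝ → ℝ}
    (hr : Continuous r) (hmem : ∀ t ∈ Icc 0 C.T, (t, r t) ∈ C.sector j) :
    ContinuousOn (fun t => zbar j (t, r t)) (Icc 0 C.T) :=
  (hz j).comp (continuous_id.prodMk hr).continuousOn hmem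

theorem contDiffOn_xiL (hC : C.IsHyperbolicData) (hroom : 2 * (C.lmax * C.T) < C.ℓ)
    (hlam : ∀ i, Continuous fun y => C.lam y i) (hz : C.IsPC0 zbar) :
    ContDiffOn ℝ 1 (C.xiL zbar) (Icc 0 C.T) :=
  have hspeed := (hlam (Fin.last n)).comp_continuousOn <| continuousOn_comp_ray hz
    (j := 0) (r := fun t => -C.ℓ + C.lmax * t) (by fun_prop) fun _ ht =>
      ⟨ht, le_rfl, (left_lt_shock hC hroom 0 ht).le⟩
  (IsCurveOfSpeed.of_continuousOn hC.hT.le hspeed fun _ _ => rfl).contDiffOn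

theorem contDiffOn_xiR (hC : C.IsHyperbolicData) (hroom : 2 * (C.lmax * C.T) < C.ℓ)
    (hlam : ∀ i, Continuous fun y => C.lam y i) (hz : C.IsPC0 zbar) :
    ContDiffOn ℝ 1 (C.xiR zbar) (Icc 0 C.T) :=
  have hspeed := (hlam 0).comp_continuousOn <| continuousOn_comp_ray hz
    (j := Fin.last (n + 1)) (r := fun t => C.ℓ - C.lmax * t) (by fun_prop) fun t ht => by
      rw [sector_last]
      exact ⟨ht, (shock_lt_right hC hroom _ ht).le, le_rfl⟩
  (IsCurveOfSpeed.of_continuousOn hC.hT.le hspeed fun _ _ => rfl).contDiffOn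

/-- The speed of the `k`-th shock curve, read off the two traces of `z̄` on the ray
`x̄ = s_k t`. -/
def shockSpeed (C : Ctx n) (zbar : Comp n) (k : Fin (n + 1)) (t : ℝ) : ℝ :=
  C.lam2 (zbar k.castSucc (t, C.s k * t)) (zbar k.succ (t, C.s k * t)) k

theorem isCurveOfSpeed_xiS (hC : C.IsHyperbolicData) (hroom : 2 * (C.lmax * C.T) < C.ℓ)
    (hlam2 : ∀ i, Continuous fun q : Rd n × Rd n => C.lam2 q.1 q.2 i) (hz : C.IsPC0 zbar)
    (k : Fin (n + 1)) :
    IsCurveOfSpeed C.T x₀ (fun t => C.shockSpeed zbar k (projIcc 0 C.T hC.hT.le t))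
      (C.xiS x₀ zbar k) := by
  have hray : Continuous fun t => C.s k * t := by fun_prop
  refine .of_continuousOn hC.hT.le ((hlam2 k).comp_continuousOn (.prodMk ?_ ?_)) fun _ _ => rfl
  · exact continuousOn_comp_ray hz hray fun _ ht => shock_mem_sector_castSucc hC hroom k ht
  · exact continuousOn_comp_ray hz hray fun _ ht => shock_mem_sector_succ hC hroom k ht

theorem abs_integral_speed_le (hC : C.IsHyperbolicData) {f : ℝ → ℝ}
    (hf : ∀ τ, |f τ| ≤ C.lmax) {t : ℝ} (ht : t ∈ Icc 0 C.T) :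
    |∫ τ in (0 : ℝ)..t, f τ| ≤ C.lmax * C.T := by
  have hint := norm_integral_le_of_norm_le_const (a := 0) (b := t) (f := f) fun τ _ => hf τ
  rw [sub_zero, abs_of_nonneg ht.1] at hint
  exact hint.trans (mul_le_mul_of_nonneg_left ht.2 hC.hlmax.le)

theorem xiL_lt_xiS (hC : C.IsHyperbolicData) (hroom : |x₀| + 2 * (C.lmax * C.T) < C.ℓ)
    (k : Fin (n + 1)) {t : ℝ} (ht : t ∈ Icc 0 C.T) : C.xiL zbar t < C.xiS x₀ zbar k t := by
  have hL := abs_integral_speed_le hC (fun τ => hC.hlamBound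
    (zbar 0 (τ, -C.ℓ + C.lmax * τ)) (Fin.last n)) ht
  have hS := abs_integral_speed_le hC (fun τ => hC.hlam2Bound
    (zbar k.castSucc (τ, C.s k * τ)) (zbar k.succ (τ, C.s k * τ)) k) ht
  unfold xiL xiS
  linarith [(abs_le.1 hL).2, (abs_le.1 hS).1, neg_abs_le x₀]

theorem xiS_lt_xiR (hC : C.IsHyperbolicData) (hroom : |x₀| + 2 * (C.lmax * C.T) < C.ℓ)
    (k : Fin (n + 1)) {t : ℝ} (ht : t ∈ Icc 0 C.T) : C.xiS x₀ zbar k t < C.xiR zbar t := by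
  have hS := abs_integral_speed_le hC (fun τ => hC.hlam2Bound
    (zbar k.castSucc (τ, C.s k * τ)) (zbar k.succ (τ, C.s k * τ)) k) ht
  have hR := abs_integral_speed_le hC (fun τ => hC.hlamBound
    (zbar (Fin.last (n + 1)) (τ, C.ℓ - C.lmax * τ)) 0) ht
  unfold xiS xiR
  linarith [(abs_le.1 hS).2, (abs_le.1 hR).1, le_abs_self x₀]

end BoundaryCurves

section SectorTransforms

theorem convexOn_const_mul (s : ℝ) {D : Set ℝ} (hD : Convex ℝ D) :
    ConvexOn ℝ D fun t => s * t :=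
  (LinearMap.mulLeft ℝ s).convexOn hD

theorem concaveOn_const_mul (s : ℝ) {D : Set ℝ} (hD : Convex ℝ D) :
    ConcaveOn ℝ D fun t => s * t :=
  (LinearMap.mulLeft ℝ s).concaveOn hD

theorem isSpaceTransform_zero (hC : C.IsHyperbolicData)
    (hlam : ∀ i, Continuous fun y => C.lam y i)
    (hlam2 : ∀ i, Continuous fun q : Rd n × Rd n => C.lam2 q.1 q.2 i) (hz : C.IsPC0 zbar)
    (hroom : |x₀| + 2 * (C.lmax * C.T) < C.ℓ) :
    IsSpaceTransform (C.sector 0) (C.physSector x₀ zbar 0) (C.xTrafo x₀ zbar 0)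
      (C.xbarTrafo x₀ zbar 0) := by
  have hroom_ref : 2 * (C.lmax * C.T) < C.ℓ := by linarith [abs_nonneg x₀]
  rw [sector_zero, physSector_zero, xTrafo_zero, xbarTrafo_zero]
  exact isSpaceTransform_linInterp hC.hT
    ((convexOn_const _ (convex_Icc 0 C.T)).add (convexOn_const_mul _ (convex_Icc 0 C.T)))
    (concaveOn_const_mul _ (convex_Icc 0 C.T)) (ContDiff.contDiffOn (by fun_prop))
    (ContDiff.contDiffOn (by fun_prop)) (contDiffOn_xiL hC hroom_ref hlam hz)
    (isCurveOfSpeed_xiS hC hroom_ref hlam2 hz 0).contDiffOn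
    (fun _ ht => left_lt_shock hC hroom_ref 0 ht) fun _ ht => xiL_lt_xiS hC hroom 0 ht

theorem isSpaceTransform_last (hC : C.IsHyperbolicData)
    (hlam : ∀ i, Continuous fun y => C.lam y i)
    (hlam2 : ∀ i, Continuous fun q : Rd n × Rd n => C.lam2 q.1 q.2 i) (hz : C.IsPC0 zbar)
    (hroom : |x₀| + 2 * (C.lmax * C.T) < C.ℓ) :
    IsSpaceTransform (C.sector (Fin.last (n + 1))) (C.physSector x₀ zbar (Fin.last (n + 1)))
      (C.xTrafo x₀ zbar (Fin.last (n + 1))) (C.xbarTrafo x₀ zbar (Fin.last (n + 1))) := by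
  have hroom_ref : 2 * (C.lmax * C.T) < C.ℓ := by linarith [abs_nonneg x₀]
  rw [sector_last, physSector_last, xTrafo_last, xbarTrafo_last]
  exact isSpaceTransform_linInterp hC.hT (convexOn_const_mul _ (convex_Icc 0 C.T))
    ((concaveOn_const _ (convex_Icc 0 C.T)).sub (convexOn_const_mul _ (convex_Icc 0 C.T)))
    (ContDiff.contDiffOn (by fun_prop)) (ContDiff.contDiffOn (by fun_prop))
    (isCurveOfSpeed_xiS hC hroom_ref hlam2 hz _).contDiffOn (contDiffOn_xiR hC hroom_ref hlam hz)
    (fun _ ht => shock_lt_right hC hroom_ref _ ht) fun _ ht => xiS_lt_xiR hC hroom _ ht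

theorem isSpaceTransform_mid (hC : C.IsHyperbolicData)
    (hlam2 : ∀ i, Continuous fun q : Rd n × Rd n => C.lam2 q.1 q.2 i)
    (hsep : ∀ (i : Fin n) y₁ y₂ y₁' y₂', C.lam2 y₁ y₂ i.castSucc < C.lam2 y₁' y₂' i.succ)
    (hz : C.IsPC0 zbar) (hroom : 2 * (C.lmax * C.T) < C.ℓ) (i : Fin n) :
    IsSpaceTransform (C.sector i.succ.castSucc) (C.physSector x₀ zbar i.succ.castSucc)
      (C.xTrafo x₀ zbar i.succ.castSucc) (C.xbarTrafo x₀ zbar i.succ.castSucc) := by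
  rw [sector_mid, physSector_mid, xTrafo_mid, xbarTrafo_mid]
  exact isSpaceTransform_wedge hC.hT (convexOn_const_mul _ (convex_Icc 0 C.T))
    (concaveOn_const_mul _ (convex_Icc 0 C.T)) .const_mul .const_mul
    (isCurveOfSpeed_xiS hC hroom hlam2 hz _) (isCurveOfSpeed_xiS hC hroom hlam2 hz _)
    (fun _ => hC.hsMono i.castSucc_lt_succ) fun _ => hsep i _ _ _ _

theorem isSpaceTransform (hC : C.IsHyperbolicData)
    (hlam : ∀ i, Continuous fun y => C.lam y i)
    (hlam2 : ∀ i, Continuous fun q : Rd n × Rd n => C.lam2 q.1 q.2 i)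
    (hsep : ∀ (i : Fin n) y₁ y₂ y₁' y₂', C.lam2 y₁ y₂ i.castSucc < C.lam2 y₁' y₂' i.succ)
    (hz : C.IsPC0 zbar) (hroom : |x₀| + 2 * (C.lmax * C.T) < C.ℓ) (j : Fin (n + 2)) :
    IsSpaceTransform (C.sector j) (C.physSector x₀ zbar j) (C.xTrafo x₀ zbar j)
      (C.xbarTrafo x₀ zbar j) := by
  cases j using Fin.lastCases with
  | last => exact isSpaceTransform_last hC hlam hlam2 hz hroom
  | cast k =>
    cases k using Fin.cases with
    | zero => exact isSpaceTransform_zero hC hlam hlam2 hz hroom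
    | succ i =>
      exact isSpaceTransform_mid hC hlam2 hsep hz (by linarith [abs_nonneg x₀]) i

end SectorTransforms

end Ctx

theorem Ctx.IsHyperbolicData.abs_add_two_mul_lt {n : ℕ} {C : Ctx n} (hC : C.IsHyperbolicData)
    {ε x₀ : ℝ} (hx₀ : x₀ ∈ Icc (-ε) ε) (hε : ε ≤ C.ℓ / 6) (hT : C.T ≤ C.ℓ / (6 * C.lmax)) :
    |x₀| + 2 * (C.lmax * C.T) < C.ℓ := by
  have hx₀_le := abs_le.2 hx₀
  have hT_mul := (le_div_iff₀ (mul_pos (by norm_num) hC.hlmax)).1 hT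
  linarith [hC.hl]

theorem Ctx.lam2_castSucc_lt_lam2_succ {n : ℕ} {C : Ctx n} {η : ℝ} {lo hi : Fin (n + 1) → ℝ}
    (hη : 0 < η) (hmem : ∀ y₁ y₂ i, C.lam2 y₁ y₂ i ∈ Icc (lo i) (hi i))
    (hgap : ∀ i : Fin n, η ≤ lo i.succ - hi i.castSucc) (i : Fin n) (y₁ y₂ y₁' y₂' : Rd n) :
    C.lam2 y₁ y₂ i.castSucc < C.lam2 y₁' y₂' i.succ := by
  linarith [(hmem y₁ y₂ i.castSucc).2, (hmem y₁' y₂' i.succ).1, hgap i]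

theorem statement3_general {n : ℕ} (C : Ctx n) (hC : C.IsHyperbolicData)
    (hlam : ∀ i, Continuous fun y => C.lam y i)
    (hlam2 : ∀ i, Continuous fun q : Rd n × Rd n => C.lam2 q.1 q.2 i)
    (hsep : ∀ (i : Fin n) y₁ y₂ y₁' y₂', C.lam2 y₁ y₂ i.castSucc < C.lam2 y₁' y₂' i.succ)
    (zbar : Comp n) (x₀ : ℝ) (hz : C.IsPC0 zbar) (hroom : |x₀| + 2 * (C.lmax * C.T) < C.ℓ) :
    (∀ j ybar,
      IsClassicalSol (C.sector j)
        (transformedCoeff (C.xTrafo x₀ zbar j) (C.sector j) fun p => fderiv ℝ C.f (zbar j p))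
        (fun p v => C.g p.1 (C.xTrafo x₀ zbar j p) v) ybar →
      IsClassicalSol (C.physSector x₀ zbar j)
        (fun q => fderiv ℝ C.f (zbar j (q.1, C.xbarTrafo x₀ zbar j q)))
        (fun q v => C.g q.1 q.2 v) fun q => ybar (q.1, C.xbarTrafo x₀ zbar j q)) ∧
    (∀ j yphys,
      IsClassicalSol (C.physSector x₀ zbar j)
        (fun q => fderiv ℝ C.f (zbar j (q.1, C.xbarTrafo x₀ zbar j q)))
        (fun q v => C.g q.1 q.2 v) yphys →
      IsClassicalSol (C.sector j)
        (transformedCoeff (C.xTrafo x₀ zbar j) (C.sector j) fun p => fderiv ℝ C.f (zbar j p))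
        (fun p v => C.g p.1 (C.xTrafo x₀ zbar j p) v) fun p =>
          yphys (p.1, C.xTrafo x₀ zbar j p)) ∧
    ∀ j, ∀ p ∈ C.sector j, IsStrictlyHyperbolic
      (transformedCoeff (C.xTrafo x₀ zbar j) (C.sector j)
        (fun q => fderiv ℝ C.f (zbar j q)) p) := by
  have htransform := Ctx.isSpaceTransform hC hlam hlam2 hsep hz hroom
  exact ⟨fun j _ => (htransform j).isClassicalSol_comp_inv (G := fun p v => C.g p.1 p.2 v),
    fun j _ => (htransform j).isClassicalSol_comp (A := fun p => fderiv ℝ C.f (zbar j p))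
      (G := fun p v => C.g p.1 p.2 v),
    fun j _ hp => (htransform j).isStrictlyHyperbolic_transformedCoeff hp
      (hC.isStrictlyHyperbolic_fderiv _)⟩

/-- equivalence of the semilinear problem in the reference space
and in physical coordinates, and strict hyperbolicity of `Ā^{(z̄,x₀),j}`. -/
theorem statement3
    (n : ℕ) (C : Ctx n) (hC : C.IsHyperbolicData)
    (ε M₁ ηmin gradLam cmax Ynorm : ℝ)
    (lamLo lamHi : Fin (n + 1) → ℝ)
    (hη : 0 < ηmin)
    (hLamMem : ∀ y i, C.lam y i ∈ Icc (lamLo i) (lamHi i))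
    (hLam2Mem : ∀ y₁ y₂ i, C.lam2 y₁ y₂ i ∈ Icc (lamLo i) (lamHi i))
    (hgap : ∀ i : Fin n, ηmin ≤ lamLo i.succ - lamHi i.castSucc)
    (hsMem : ∀ k, C.s k ∈ Icc (lamLo k) (lamHi k))
    (hgradLam : 0 ≤ gradLam)
    (hLip : ∀ i, LipschitzWith (Real.toNNReal gradLam) (fun y => C.lam y i))
    (hLip2 : ∀ i, LipschitzWith (Real.toNNReal gradLam)
      (fun q : Rd n × Rd n => C.lam2 q.1 q.2 i))
    (hg : ContDiff ℝ 1 (fun q : ℝ × ℝ × Rd n => C.g q.1 q.2.1 q.2.2))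
    (uL uR : Rd n) (J : Set (Rd n × Rd n)) (hJ : J ∈ nhds (uL, uR))
    (yhat : Fin (n + 2) → Rd n) (hyhat0 : yhat 0 = uL)
    (hyhatN : yhat (Fin.last (n + 1)) = uR)
    (hspeed : ∀ k : Fin (n + 1), C.s k = C.lam2 (yhat k.castSucc) (yhat k.succ) k)
    (zbar : Comp n) (x₀ : ℝ) (hx₀ : x₀ ∈ Icc (-ε) ε)
    (hPC1 : C.IsPC1 zbar) (hYnorm : C.PC1BoundedBy zbar Ynorm)
    (hM1L : ∀ x ∈ Icc (-C.ℓ) (0:ℝ),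
      ‖derivWithin (fun x' => zbar 0 (0, x')) (Icc (-C.ℓ) 0) x‖ ≤ M₁)
    (hM1R : ∀ x ∈ Icc (0:ℝ) C.ℓ,
      ‖derivWithin (fun x' => zbar (Fin.last (n + 1)) (0, x')) (Icc 0 C.ℓ) x‖ ≤ M₁)
    (hJ0 : (zbar 0 (0, 0), zbar (Fin.last (n + 1)) (0, 0)) ∈ J)
    (hcmax : ∀ j : Fin (n + 2), (j : ℕ) ≠ 0 → (j : ℕ) ≠ n + 1 →
      ‖zbar j (0, 0) - yhat j‖ ≤ cmax)
    (hsmall1 : gradLam * (C.T * Ynorm + cmax) ≤ ηmin / 8)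
    (hsmall2 : ε ≤ C.ℓ / 6)
    (hsmall3 : C.T ≤ C.ℓ / (6 * C.lmax)) :
    -- reference-space solution transforms to a physical classical solution …
    (∀ j : Fin (n + 2), ∀ ybarj : ℝ × ℝ → Rd n,
      ContDiffOn ℝ 1 ybarj (C.sector j) →
      (∀ p ∈ C.sector j,
        fderivWithin ℝ ybarj (C.sector j) p (1, 0) +
          C.AbarOp x₀ zbar j p (fderivWithin ℝ ybarj (C.sector j) p (0, 1)) =
          C.g p.1 (C.xTrafo x₀ zbar j p) (ybarj p)) →
      (ContDiffOn ℝ 1 (fun p : ℝ × ℝ => ybarj (p.1, C.xbarTrafo x₀ zbar j p))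
          (C.physSector x₀ zbar j) ∧
        ∀ p ∈ C.physSector x₀ zbar j,
          fderivWithin ℝ (fun q : ℝ × ℝ => ybarj (q.1, C.xbarTrafo x₀ zbar j q))
              (C.physSector x₀ zbar j) p (1, 0) +
            fderiv ℝ C.f (zbar j (p.1, C.xbarTrafo x₀ zbar j p))
              (fderivWithin ℝ (fun q : ℝ × ℝ => ybarj (q.1, C.xbarTrafo x₀ zbar j q))
                (C.physSector x₀ zbar j) p (0, 1)) =
            C.g p.1 p.2 (ybarj (p.1, C.xbarTrafo x₀ zbar j p)))) ∧
    -- … and conversely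
    (∀ j : Fin (n + 2), ∀ yphys : ℝ × ℝ → Rd n,
      ContDiffOn ℝ 1 yphys (C.physSector x₀ zbar j) →
      (∀ p ∈ C.physSector x₀ zbar j,
        fderivWithin ℝ yphys (C.physSector x₀ zbar j) p (1, 0) +
          fderiv ℝ C.f (zbar j (p.1, C.xbarTrafo x₀ zbar j p))
            (fderivWithin ℝ yphys (C.physSector x₀ zbar j) p (0, 1)) =
          C.g p.1 p.2 (yphys p)) →
      (ContDiffOn ℝ 1 (fun p : ℝ × ℝ => yphys (p.1, C.xTrafo x₀ zbar j p))
          (C.sector j) ∧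
        ∀ p ∈ C.sector j,
          fderivWithin ℝ (fun q : ℝ × ℝ => yphys (q.1, C.xTrafo x₀ zbar j q))
              (C.sector j) p (1, 0) +
            C.AbarOp x₀ zbar j p
              (fderivWithin ℝ (fun q : ℝ × ℝ => yphys (q.1, C.xTrafo x₀ zbar j q))
                (C.sector j) p (0, 1)) =
            C.g p.1 (C.xTrafo x₀ zbar j p)
              (yphys (p.1, C.xTrafo x₀ zbar j p)))) ∧
    -- under the smallness assumptions, `Ā^{(z̄,x₀),j}` is strictly hyperbolic
    (∀ j : Fin (n + 2), ∀ p ∈ C.sector j,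
      ∃ μ : Fin (n + 1) → ℝ, StrictMono μ ∧
        ∃ w : Fin (n + 1) → Rd n, ∀ i,
          w i ≠ 0 ∧ C.AbarOp x₀ zbar j p (w i) = μ i • w i) := by
  obtain ⟨hphys, href, hhyp⟩ := statement3_general C hC (fun i => (hLip i).continuous)
    (fun i => (hLip2 i).continuous) (Ctx.lam2_castSucc_lt_lam2_succ hη hLam2Mem hgap) zbar x₀
    (fun j => (hPC1 j).continuousOn) (hC.abs_add_two_mul_lt hx₀ hsmall2 hsmall3)
  exact ⟨fun j y hy hpde => hphys j y ⟨hy, hpde⟩, fun j y hy hpde => href j y ⟨hy, hpde⟩, hhyp⟩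
end
end

section
/- Let f ∈ C¹(ℝ²) and l, u ∈ C¹(ℝ³;ℝⁿ) with continuous derivatives. Then I(t,x̄) = ∫_{f(t,x̄)}^{t} l_s(s,t,x̄)ᵀ u(s,t,x̄) ds is continuously differentiable, and I_x̄(t,x̄) = ∫_{f(t,x̄)}^{t} (l_sᵀ u_x̄ − l_x̄ᵀ u_s)(s,t,x̄) ds − l_s(f(t,x̄),t,x̄)ᵀ u(f(t,x̄),t,x̄) f_x̄(t,x̄) + l_x̄(t,t,x̄)ᵀ u(t,t,x̄) − l_x̄(f(t,x̄),t,x̄)ᵀ u(f(t,x̄),t,x̄). -/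
open Set MeasureTheory intervalIntegral
open scoped RealInnerProductSpace

noncomputable section

/-! The integrand contains `∂ₛl`, which is only continuous in the parameter, so one cannot
differentiate under the integral sign directly. Give `l` and `u` independent parameters `p` and `q`:
in `q` one may differentiate under the integral, and in `p` as well once an integration by parts
has moved the `s`-derivative from `l` to `u`. Together with the fundamental theorem of calculus in
the limits of integration, this produces continuous partial derivatives in all variables, hence a
`C¹` function, and the chain rule along the diagonal `p = q` gives the formula. -/

open Function Topology

section Calculus

variable {X E F G : Type*} [TopologicalSpace X]
  [NormedAddCommGroup E] [NormedSpace ℝ E] [NormedAddCommGroup F] [NormedSpace ℝ F]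
  [NormedAddCommGroup G] [NormedSpace ℝ G]

theorem continuous_coprod {g : X → E →L[ℝ] G} {h : X → F →L[ℝ] G}
    (hg : Continuous g) (hh : Continuous h) : Continuous fun x => (g x).coprod (h x) :=
  (ContinuousLinearMap.coprodEquivL (S := ℝ)).continuous.comp (hg.prodMk hh)

theorem hasFDerivAt_coprod_of_continuous {f : E → F → G} {f₁ : E → F → E →L[ℝ] G}
    {f₂ : E → F → F →L[ℝ] G}
    (h₁ : ∀ x y, HasFDerivAt (f · y) (f₁ x y) x) (h₂ : ∀ x y, HasFDerivAt (f x) (f₂ x y) y)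
    (c₁ : Continuous (uncurry f₁)) (c₂ : Continuous (uncurry f₂)) (z : E × F) :
    HasFDerivAt (uncurry f) ((f₁ z.1 z.2).coprod (f₂ z.1 z.2)) z :=
  (hasStrictFDerivAt_uncurry_coprod (.of_forall fun v => h₁ v.1 v.2)
    (.of_forall fun v => h₂ v.1 v.2) c₁.continuousAt c₂.continuousAt).hasFDerivAt

theorem deriv_eq_fderiv_uncurry {f : E → ℝ → G} (hf : ContDiff ℝ 1 (uncurry f)) (x : E) (y : ℝ) :
    deriv (f x) y = fderiv ℝ (uncurry f) (x, y) (0, 1) :=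
  ((hf.differentiable one_ne_zero (x, y)).hasFDerivAt.comp_hasDerivAt y
    ((hasDerivAt_const y x).prodMk (hasDerivAt_id y))).deriv

section PartialDerivatives

variable {L : ℝ → E → F}

theorem hasDerivAt_uncurry_left (hL : ContDiff ℝ 1 (uncurry L)) (s : ℝ) (p : E) :
    HasDerivAt (L · p) (deriv (L · p) s) s :=
  ((hL.comp (contDiff_prodMk_left p)).differentiable one_ne_zero s).hasDerivAt

theorem hasFDerivAt_uncurry_right (hL : ContDiff ℝ 1 (uncurry L)) (s : ℝ) (p : E) :
    HasFDerivAt (L s) (fderiv ℝ (L s) p) p :=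
  ((hL.comp (contDiff_prodMk_right s)).differentiable one_ne_zero p).hasFDerivAt

theorem continuous_fderiv_right (hL : ContDiff ℝ 1 (uncurry L)) {g : X → ℝ} {h : X → E}
    (hg : Continuous g) (hh : Continuous h) : Continuous fun x => fderiv ℝ (L (g x)) (h x) := by
  have joint : Continuous fun z : ℝ × E => fderiv ℝ (L z.1) z.2 :=
    Continuous.fderiv_one (f := fun z : ℝ × E => L z.1)
      (hL.comp ((contDiff_fst.comp contDiff_fst).prodMk contDiff_snd)) continuous_snd
  exact joint.comp (hg.prodMk hh)

theorem continuous_deriv_left (hL : ContDiff ℝ 1 (uncurry L)) {g : X → ℝ} {h : X → E}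
    (hg : Continuous g) (hh : Continuous h) : Continuous fun x => deriv (L · (h x)) (g x) := by
  have joint : Continuous fun z : ℝ × E => fderiv ℝ (L · z.2) z.1 :=
    Continuous.fderiv_one (f := fun (z : ℝ × E) s => L s z.2)
      (hL.comp (contDiff_snd.prodMk (contDiff_snd.comp contDiff_fst))) continuous_fst
  simp only [← fderiv_apply_one_eq_deriv]
  exact (joint.comp (hg.prodMk hh)).clm_apply continuous_const

end PartialDerivatives

section Integral

theorem continuous_integral_of_continuous_limits {f : X → ℝ → G} {a b : X → ℝ}
    (hf : Continuous (uncurry f)) (ha : Continuous a) (hb : Continuous b) :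
    Continuous fun x => ∫ s in a x..b x, f x s := by
  have split_at_zero (x : X) :
      ∫ s in a x..b x, f x s = (∫ s in (0 : ℝ)..b x, f x s) - ∫ s in (0 : ℝ)..a x, f x s :=
    (integral_interval_sub_left ((hf.uncurry_left x).intervalIntegrable _ _)
      ((hf.uncurry_left x).intervalIntegrable _ _)).symm
  simp only [split_at_zero]
  fun_prop

theorem hasFDerivAt_integral_of_continuous {f : E → ℝ → G} {f' : E → ℝ → E →L[ℝ] G}
    (hf : Continuous (uncurry f)) (hf' : Continuous (uncurry f'))
    (hd : ∀ x s, HasFDerivAt (f · s) (f' x s) x) (a b : ℝ) (x₀ : E) :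
    HasFDerivAt (fun x => ∫ s in a..b, f x s) (∫ s in a..b, f' x₀ s) x₀ := by
  obtain ⟨C, hC⟩ := isCompact_uIcc.exists_bound_of_continuousOn (s := uIcc a b)
    (hf'.uncurry_left x₀).continuousOn
  have locally_bounded : ∀ᶠ x in 𝓝 x₀, ∀ s ∈ uIcc a b, ‖f' x s‖ < C + 1 :=
    isCompact_uIcc.eventually_forall_of_forall_eventually fun s hs =>
      hf'.norm.continuousAt.eventually_lt_const (lt_add_of_le_of_pos (hC s hs) one_pos)
  exact hasFDerivAt_integral_of_dominated_of_fderiv_le (bound := fun _ => C + 1) locally_bounded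
    (.of_forall fun x => (hf.uncurry_left x).aestronglyMeasurable)
    ((hf.uncurry_left x₀).intervalIntegrable _ _)
    (hf'.uncurry_left x₀).aestronglyMeasurable
    (.of_forall fun s hs x hx => (hx s (uIoc_subset_uIcc hs)).le)
    intervalIntegrable_const
    (.of_forall fun s _ x _ => hd x s)

end Integral

end Calculus

section Decoupled

variable {P Q E₁ E₂ V W G : Type*} [NormedAddCommGroup E₁] [NormedSpace ℝ E₁]
  [NormedAddCommGroup E₂] [NormedSpace ℝ E₂] [NormedAddCommGroup V] [NormedSpace ℝ V]
  [NormedAddCommGroup W] [NormedSpace ℝ W] [NormedAddCommGroup G] [NormedSpace ℝ G]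

/-- The integral `∫ₐᵇ B (∂ₛL(s, p)) (U(s, q)) ds` with separate parameters `p` and `q`, as a
function of the limits `c = (a, b)` and of `w = (p, q)`. -/
def decoupledIntegral (B : V →L[ℝ] W →L[ℝ] G) (L : ℝ → P → V) (U : ℝ → Q → W)
    (c : ℝ × ℝ) (w : P × Q) : G :=
  ∫ s in c.1..c.2, B (deriv (L · w.1) s) (U s w.2)

namespace decoupledIntegral

/-- The partial derivative of `decoupledIntegral` in the limits of integration. -/
def fderivLimits (B : V →L[ℝ] W →L[ℝ] G) (L : ℝ → P → V) (U : ℝ → Q → W)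
    (c : ℝ × ℝ) (w : P × Q) : ℝ × ℝ →L[ℝ] G :=
  (ContinuousLinearMap.snd ℝ ℝ ℝ).smulRight (B (deriv (L · w.1) c.2) (U c.2 w.2)) -
    (ContinuousLinearMap.fst ℝ ℝ ℝ).smulRight (B (deriv (L · w.1) c.1) (U c.1 w.2))

/-- The partial derivative of `decoupledIntegral` in the parameter of `U`. -/
def fderivRight (B : V →L[ℝ] W →L[ℝ] G) (L : ℝ → P → V) (U : ℝ → E₂ → W)
    (c : ℝ × ℝ) (w : P × E₂) : E₂ →L[ℝ] G :=
  ∫ s in c.1..c.2, B (deriv (L · w.1) s) ∘L fderiv ℝ (U s) w.2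

/-- The partial derivative of `decoupledIntegral` in the parameter of `L`, in the form obtained
after an integration by parts, which exchanges the roles of `L` and `U`. -/
def fderivLeft (B : V →L[ℝ] W →L[ℝ] G) (L : ℝ → E₁ → V) (U : ℝ → Q → W)
    (c : ℝ × ℝ) (w : E₁ × Q) : E₁ →L[ℝ] G :=
  B.flip (U c.2 w.2) ∘L fderiv ℝ (L c.2) w.1 - B.flip (U c.1 w.2) ∘L fderiv ℝ (L c.1) w.1 -
    fderivRight B.flip U L c w.swap

variable (B : V →L[ℝ] W →L[ℝ] G) {L : ℝ → E₁ → V} {U : ℝ → E₂ → W}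

theorem continuous_integrand [TopologicalSpace Q] {U : ℝ → Q → W}
    (hL : ContDiff ℝ 1 (uncurry L)) (hU : Continuous (uncurry U))
    {X : Type*} [TopologicalSpace X] {g : X → ℝ} {h : X → E₁} {k : X → Q}
    (hg : Continuous g) (hh : Continuous h) (hk : Continuous k) :
    Continuous fun x => B (deriv (L · (h x)) (g x)) (U (g x) (k x)) :=
  (B.continuous.comp (continuous_deriv_left hL hg hh)).clm_apply
    (hU.comp (hg.prodMk hk))

theorem continuous_comp_fderiv (hL : ContDiff ℝ 1 (uncurry L)) (hU : ContDiff ℝ 1 (uncurry U))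
    {X : Type*} [TopologicalSpace X] {g : X → ℝ} {h : X → E₁} {k : X → E₂}
    (hg : Continuous g) (hh : Continuous h) (hk : Continuous k) :
    Continuous fun x => B (deriv (L · (h x)) (g x)) ∘L fderiv ℝ (U (g x)) (k x) :=
  (B.continuous.comp (continuous_deriv_left hL hg hh)).clm_comp (continuous_fderiv_right hU hg hk)

theorem integral_by_parts [CompleteSpace G]
    (hL : ContDiff ℝ 1 (uncurry L)) (hU : ContDiff ℝ 1 (uncurry U)) (c : ℝ × ℝ) (w : E₁ × E₂) :
    decoupledIntegral B L U c w =
      B.flip (U c.2 w.2) (L c.2 w.1) - B.flip (U c.1 w.2) (L c.1 w.1) -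
        decoupledIntegral B.flip U L c w.swap := by
  have integrable_deriv_left :
      IntervalIntegrable (fun s => B (deriv (L · w.1) s) (U s w.2)) volume c.1 c.2 :=
    (continuous_integrand B hL hU.continuous continuous_id continuous_const
      continuous_const).intervalIntegrable _ _
  have integrable_deriv_right :
      IntervalIntegrable (fun s => B.flip (deriv (U · w.2) s) (L s w.1)) volume c.1 c.2 :=
    (continuous_integrand B.flip hU hL.continuous continuous_id continuous_const
      continuous_const).intervalIntegrable _ _
  have product_rule (s : ℝ) : HasDerivAt (fun s => B.flip (U s w.2) (L s w.1))
      (B (deriv (L · w.1) s) (U s w.2) + B.flip (deriv (U · w.2) s) (L s w.1)) s :=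
    B.flip.hasDerivAt_of_bilinear (fun _ => hasDerivAt_uncurry_left hU s w.2)
      (fun _ => hasDerivAt_uncurry_left hL s w.1)
  rw [← integral_eq_sub_of_hasDerivAt (fun s _ => product_rule s)
      (integrable_deriv_left.add integrable_deriv_right),
    integral_add integrable_deriv_left integrable_deriv_right]
  exact (add_sub_cancel_right _ _).symm

theorem hasFDerivAt_limits [CompleteSpace G] [TopologicalSpace Q] {U : ℝ → Q → W}
    (hL : ContDiff ℝ 1 (uncurry L)) (hU : Continuous (uncurry U)) (c : ℝ × ℝ) (w : E₁ × Q) :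
    HasFDerivAt (decoupledIntegral B L U · w) (fderivLimits B L U c w) c := by
  have cont : Continuous fun s => B (deriv (L · w.1) s) (U s w.2) :=
    continuous_integrand B hL hU continuous_id continuous_const continuous_const
  exact integral_hasFDerivAt (cont.intervalIntegrable _ _)
    (cont.stronglyMeasurableAtFilter _ _) (cont.stronglyMeasurableAtFilter _ _)
    cont.continuousAt cont.continuousAt

theorem hasFDerivAt_right
    (hL : ContDiff ℝ 1 (uncurry L)) (hU : ContDiff ℝ 1 (uncurry U)) (c : ℝ × ℝ) (p : E₁) (q : E₂) :
    HasFDerivAt (fun q => decoupledIntegral B L U c (p, q)) (fderivRight B L U c (p, q)) q :=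
  hasFDerivAt_integral_of_continuous
    (continuous_integrand B hL hU.continuous continuous_snd continuous_const continuous_fst)
    (continuous_comp_fderiv B hL hU continuous_snd continuous_const continuous_fst)
    (fun q s => (B (deriv (L · p) s)).hasFDerivAt.comp q (hasFDerivAt_uncurry_right hU s q)) _ _ q

theorem hasFDerivAt_left [CompleteSpace G]
    (hL : ContDiff ℝ 1 (uncurry L)) (hU : ContDiff ℝ 1 (uncurry U)) (c : ℝ × ℝ) (p : E₁) (q : E₂) :
    HasFDerivAt (fun p => decoupledIntegral B L U c (p, q)) (fderivLeft B L U c (p, q)) p := by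
  have boundary (s : ℝ) : HasFDerivAt (fun p => B.flip (U s q) (L s p))
      (B.flip (U s q) ∘L fderiv ℝ (L s) p) p :=
    (B.flip (U s q)).hasFDerivAt.comp p (hasFDerivAt_uncurry_right hL s p)
  simp only [integral_by_parts B hL hU]
  exact ((boundary c.2).sub (boundary c.1)).sub (hasFDerivAt_right B.flip hU hL c q p)

theorem continuous_fderivLimits [TopologicalSpace Q] {U : ℝ → Q → W}
    (hL : ContDiff ℝ 1 (uncurry L)) (hU : Continuous (uncurry U)) :
    Continuous (uncurry (fderivLimits B L U)) := by
  have endpoint {g : (ℝ × ℝ) × E₁ × Q → ℝ} (hg : Continuous g) :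
      Continuous fun z => B (deriv (L · z.2.1) (g z)) (U (g z) z.2.2) :=
    continuous_integrand B hL hU hg (by fun_prop) (by fun_prop)
  have at_upper := endpoint (g := fun z => z.1.2) (by fun_prop)
  have at_lower := endpoint (g := fun z => z.1.1) (by fun_prop)
  exact (((ContinuousLinearMap.smulRightL ℝ (ℝ × ℝ) G _).continuous.comp at_upper).sub
    ((ContinuousLinearMap.smulRightL ℝ (ℝ × ℝ) G _).continuous.comp at_lower))

theorem continuous_fderivRight
    (hL : ContDiff ℝ 1 (uncurry L)) (hU : ContDiff ℝ 1 (uncurry U)) :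
    Continuous (uncurry (fderivRight B L U)) :=
  continuous_integral_of_continuous_limits
    (continuous_comp_fderiv B hL hU continuous_snd (by fun_prop) (by fun_prop))
    (by fun_prop) (by fun_prop)

theorem continuous_fderivLeft
    (hL : ContDiff ℝ 1 (uncurry L)) (hU : ContDiff ℝ 1 (uncurry U)) :
    Continuous (uncurry (fderivLeft B L U)) := by
  have endpoint {g : (ℝ × ℝ) × E₁ × E₂ → ℝ} (hg : Continuous g) :
      Continuous fun z => B.flip (U (g z) z.2.2) ∘L fderiv ℝ (L (g z)) z.2.1 :=
    (B.flip.continuous.comp (hU.continuous.comp (hg.prodMk (by fun_prop)))).clm_comp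
      (continuous_fderiv_right hL hg (by fun_prop))
  exact ((endpoint (by fun_prop)).sub (endpoint (by fun_prop))).sub
    ((continuous_fderivRight B.flip hU hL).comp (continuous_fst.prodMk
      (continuous_swap.comp continuous_snd)))

/-- The total derivative of `decoupledIntegral`, assembled from its partial derivatives. -/
def totalFDeriv (B : V →L[ℝ] W →L[ℝ] G) (L : ℝ → E₁ → V) (U : ℝ → E₂ → W)
    (z : (ℝ × ℝ) × E₁ × E₂) : (ℝ × ℝ) × E₁ × E₂ →L[ℝ] G :=
  (fderivLimits B L U z.1 z.2).coprod
    ((fderivLeft B L U z.1 z.2).coprod (fderivRight B L U z.1 z.2))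

theorem continuous_totalFDeriv
    (hL : ContDiff ℝ 1 (uncurry L)) (hU : ContDiff ℝ 1 (uncurry U)) :
    Continuous (totalFDeriv B L U) :=
  continuous_coprod (continuous_fderivLimits B hL hU.continuous)
    (continuous_coprod (continuous_fderivLeft B hL hU) (continuous_fderivRight B hL hU))

theorem hasFDerivAt [CompleteSpace G]
    (hL : ContDiff ℝ 1 (uncurry L)) (hU : ContDiff ℝ 1 (uncurry U)) (z : (ℝ × ℝ) × E₁ × E₂) :
    HasFDerivAt (uncurry (decoupledIntegral B L U)) (totalFDeriv B L U z) z := by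
  have cont_left := continuous_fderivLeft B hL hU
  have cont_right := continuous_fderivRight B hL hU
  have params (c : ℝ × ℝ) : ∀ w, HasFDerivAt (decoupledIntegral B L U c)
      ((fderivLeft B L U c w).coprod (fderivRight B L U c w)) w :=
    hasFDerivAt_coprod_of_continuous (hasFDerivAt_left B hL hU c) (hasFDerivAt_right B hL hU c)
      (cont_left.uncurry_left c) (cont_right.uncurry_left c)
  exact hasFDerivAt_coprod_of_continuous (hasFDerivAt_limits B hL hU.continuous) params
    (continuous_fderivLimits B hL hU.continuous) (continuous_coprod cont_left cont_right) z

theorem contDiff [CompleteSpace G]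
    (hL : ContDiff ℝ 1 (uncurry L)) (hU : ContDiff ℝ 1 (uncurry U)) :
    ContDiff ℝ 1 (uncurry (decoupledIntegral B L U)) :=
  contDiff_one_iff_hasFDerivAt.2
    ⟨totalFDeriv B L U, continuous_totalFDeriv B hL hU, hasFDerivAt B hL hU⟩

theorem fderivRight_apply
    (hL : ContDiff ℝ 1 (uncurry L)) (hU : ContDiff ℝ 1 (uncurry U)) (c : ℝ × ℝ) (w : E₁ × E₂)
    (e : E₂) :
    fderivRight B L U c w e =
      ∫ s in c.1..c.2, B (deriv (L · w.1) s) (fderiv ℝ (U s) w.2 e) :=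
  ContinuousLinearMap.intervalIntegral_apply ((continuous_comp_fderiv B hL hU continuous_id
    continuous_const continuous_const).intervalIntegrable _ _) e

end decoupledIntegral

end Decoupled

section Diagonal

variable {E V W G : Type*} [NormedAddCommGroup E] [NormedSpace ℝ E]
  [NormedAddCommGroup V] [NormedSpace ℝ V] [NormedAddCommGroup W] [NormedSpace ℝ W]
  [NormedAddCommGroup G] [NormedSpace ℝ G]
  (B : V →L[ℝ] W →L[ℝ] G) {L : ℝ → E → V} {U : ℝ → E → W}

theorem decoupledIntegral.totalFDeriv_diag_apply
    (hL : ContDiff ℝ 1 (uncurry L)) (hU : ContDiff ℝ 1 (uncurry U)) (a b a' b' : ℝ) (p e : E) :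
    totalFDeriv B L U ((a, b), (p, p)) ((a', b'), (e, e)) =
      (∫ s in a..b, (B (deriv (L · p) s) (fderiv ℝ (U s) p e) -
          B (fderiv ℝ (L s) p e) (deriv (U · p) s))) +
        b' • B (deriv (L · p) b) (U b p) - a' • B (deriv (L · p) a) (U a p) +
        B (fderiv ℝ (L b) p e) (U b p) - B (fderiv ℝ (L a) p e) (U a p) := by
  have integrable_right :
      IntervalIntegrable (fun s => B (deriv (L · p) s) (fderiv ℝ (U s) p e)) volume a b :=
    ((continuous_comp_fderiv B hL hU continuous_id continuous_const
      continuous_const).clm_apply continuous_const).intervalIntegrable _ _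
  have integrable_left :
      IntervalIntegrable (fun s => B (fderiv ℝ (L s) p e) (deriv (U · p) s)) volume a b :=
    ((continuous_comp_fderiv B.flip hU hL continuous_id continuous_const
      continuous_const).clm_apply continuous_const).intervalIntegrable _ _
  rw [integral_sub integrable_right integrable_left]
  simp only [totalFDeriv, fderivLimits, fderivLeft, ContinuousLinearMap.coprod_apply,
    _root_.sub_apply, ContinuousLinearMap.smulRight_apply, ContinuousLinearMap.comp_apply,
    ContinuousLinearMap.coe_fst', ContinuousLinearMap.coe_snd', ContinuousLinearMap.flip_apply,
    fderivRight_apply B hL hU, fderivRight_apply B.flip hU hL, Prod.fst_swap, Prod.snd_swap]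
  abel

theorem contDiff_integral_deriv_of_contDiff [CompleteSpace G] {a b : E → ℝ}
    (hL : ContDiff ℝ 1 (uncurry L)) (hU : ContDiff ℝ 1 (uncurry U))
    (ha : ContDiff ℝ 1 a) (hb : ContDiff ℝ 1 b) :
    ContDiff ℝ 1 (fun p => ∫ s in a p..b p, B (deriv (L · p) s) (U s p)) :=
  (decoupledIntegral.contDiff B hL hU).comp
    ((ha.prodMk hb).prodMk (contDiff_id.prodMk contDiff_id))

theorem fderiv_integral_deriv_apply [CompleteSpace G] {a b : E → ℝ}
    (hL : ContDiff ℝ 1 (uncurry L)) (hU : ContDiff ℝ 1 (uncurry U))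
    (ha : ContDiff ℝ 1 a) (hb : ContDiff ℝ 1 b) (p e : E) :
    fderiv ℝ (fun p => ∫ s in a p..b p, B (deriv (L · p) s) (U s p)) p e =
      (∫ s in a p..b p, (B (deriv (L · p) s) (fderiv ℝ (U s) p e) -
          B (fderiv ℝ (L s) p e) (deriv (U · p) s))) +
        fderiv ℝ b p e • B (deriv (L · p) (b p)) (U (b p) p) -
        fderiv ℝ a p e • B (deriv (L · p) (a p)) (U (a p) p) +
        B (fderiv ℝ (L (b p)) p e) (U (b p) p) - B (fderiv ℝ (L (a p)) p e) (U (a p) p) := by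
  have ha' := (ha.differentiable one_ne_zero p).hasFDerivAt
  have hb' := (hb.differentiable one_ne_zero p).hasFDerivAt
  have chain_rule := (decoupledIntegral.hasFDerivAt B hL hU ((a p, b p), (p, p))).comp p
    ((ha'.prodMk hb').prodMk ((hasFDerivAt_id p).prodMk (hasFDerivAt_id p)))
  exact (congrArg (· e) chain_rule.fderiv).trans
    (decoupledIntegral.totalFDeriv_diag_apply B hL hU ..)

theorem statement8_general [CompleteSpace G] {a b : E → ℝ → ℝ}
    {l : ℝ → E → ℝ → V} {u : ℝ → E → ℝ → W}
    (hl : ContDiff ℝ 1 fun q : ℝ × E × ℝ => l q.1 q.2.1 q.2.2)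
    (hu : ContDiff ℝ 1 fun q : ℝ × E × ℝ => u q.1 q.2.1 q.2.2)
    (ha : ContDiff ℝ 1 (uncurry a)) (hb : ContDiff ℝ 1 (uncurry b)) :
    ContDiff ℝ 1 (uncurry fun t x => ∫ s in a t x..b t x, B (deriv (l · t x) s) (u s t x)) ∧
    ∀ (t : E) (x : ℝ),
      deriv (fun x => ∫ s in a t x..b t x, B (deriv (l · t x) s) (u s t x)) x =
        (∫ s in a t x..b t x, (B (deriv (l · t x) s) (deriv (u s t) x) -
            B (deriv (l s t) x) (deriv (u · t x) s))) +
          deriv (b t) x • B (deriv (l · t x) (b t x)) (u (b t x) t x) -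
          deriv (a t) x • B (deriv (l · t x) (a t x)) (u (a t x) t x) +
          B (deriv (l (b t x) t) x) (u (b t x) t x) -
          B (deriv (l (a t x) t) x) (u (a t x) t x) := by
  have contDiff_integral : ContDiff ℝ 1
      (uncurry fun t x => ∫ s in a t x..b t x, B (deriv (l · t x) s) (u s t x)) :=
    contDiff_integral_deriv_of_contDiff B (L := fun s => uncurry (l s))
      (U := fun s => uncurry (u s)) hl hu ha hb
  refine ⟨contDiff_integral, fun t x => ?_⟩
  have deriv_l (s : ℝ) : deriv (l s t) x = fderiv ℝ (uncurry (l s)) (t, x) (0, 1) :=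
    deriv_eq_fderiv_uncurry (f := l s) (hl.comp (contDiff_prodMk_right s)) t x
  have deriv_u (s : ℝ) : deriv (u s t) x = fderiv ℝ (uncurry (u s)) (t, x) (0, 1) :=
    deriv_eq_fderiv_uncurry (f := u s) (hu.comp (contDiff_prodMk_right s)) t x
  simp only [deriv_l, deriv_u, deriv_eq_fderiv_uncurry ha, deriv_eq_fderiv_uncurry hb]
  exact (deriv_eq_fderiv_uncurry contDiff_integral t x).trans
    (fderiv_integral_deriv_apply B (L := fun s => uncurry (l s)) (U := fun s => uncurry (u s))
      hl hu ha hb (t, x) (0, 1))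

end Diagonal

/-- differentiation of a parameter-dependent integral with
state-dependent lower limit.  Subscripts denote partial derivatives:
`l_s = ∂₁ l`, `l_x̄ = ∂₃ l`, etc. -/
theorem statement8
    (n : ℕ) (f : ℝ → ℝ → ℝ)
    (l u : ℝ → ℝ → ℝ → EuclideanSpace ℝ (Fin n))
    (hf : ContDiff ℝ 1 (fun q : ℝ × ℝ => f q.1 q.2))
    (hl : ContDiff ℝ 1 (fun q : ℝ × ℝ × ℝ => l q.1 q.2.1 q.2.2))
    (hu : ContDiff ℝ 1 (fun q : ℝ × ℝ × ℝ => u q.1 q.2.1 q.2.2))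
    (hls : Continuous (fun q : ℝ × ℝ × ℝ =>
      deriv (fun s' => l s' q.2.1 q.2.2) q.1))
    (hlx : Continuous (fun q : ℝ × ℝ × ℝ =>
      deriv (fun x' => l q.1 q.2.1 x') q.2.2))
    (hus : Continuous (fun q : ℝ × ℝ × ℝ =>
      deriv (fun s' => u s' q.2.1 q.2.2) q.1))
    (hux : Continuous (fun q : ℝ × ℝ × ℝ =>
      deriv (fun x' => u q.1 q.2.1 x') q.2.2))
    (I : ℝ → ℝ → ℝ)
    (hI : ∀ t x, I t x =
      ∫ σ in f t x..t, ⟪deriv (fun s' => l s' t x) σ, u σ t x⟫) :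
    ContDiff ℝ 1 (fun q : ℝ × ℝ => I q.1 q.2) ∧
    ∀ t x : ℝ,
      deriv (fun x' => I t x') x =
        (∫ σ in f t x..t,
          (⟪deriv (fun s' => l s' t x) σ, deriv (fun x' => u σ t x') x⟫ -
            ⟪deriv (fun x' => l σ t x') x, deriv (fun s' => u s' t x) σ⟫)) -
        ⟪deriv (fun s' => l s' t x) (f t x), u (f t x) t x⟫ *
          deriv (fun x' => f t x') x +
        ⟪deriv (fun x' => l t t x') x, u t t x⟫ -
        ⟪deriv (fun x' => l (f t x) t x') x, u (f t x) t x⟫ := by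
  obtain rfl := funext₂ hI
  obtain ⟨contDiff_integral, deriv_integral⟩ :=
    statement8_general (innerSL ℝ) (b := fun t _ => t) hl hu hf contDiff_fst
  refine ⟨contDiff_integral, fun t x => (deriv_integral t x).trans ?_⟩
  rw [deriv_const, zero_smul, add_zero, smul_eq_mul, mul_comm]
  rfl
end
end

section
/- Let α, β > 0, m ∈ (1/2, 1], and let Y_ν ∈ C⁰([0,T]) be nonnegative for ν ∈ ℕ₀. If Y₀(t) ≤ α for all t ∈ [0,T] and Y_{ν+1}(t) ≤ α m^ν + β ∫₀ᵗ Y_ν(s) ds + (1/2) Y_ν(t) for all t ∈ [0,T] and all ν ∈ ℕ₀, then Y_ν(t) ≤ m^ν K e^{γ t} for all t ∈ [0,T] and all ν ∈ ℕ, where K = 2α/(2m − 1) and γ = 2β/(2m − 1). -/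
open Set intervalIntegral

noncomputable section

/-!
The operator `u ↦ c + β ∫ₐᵗ u + θ u(t)` is monotone when `β, θ ≥ 0`, so the iterates `Y ν` stay
below any sequence `Z ν` that starts above `Y 0` and satisfies the recursion with equality. The
ansatz `Z ν t = m ^ ν K e ^ (γ t)` satisfies it when `β K = α γ` (the constant terms cancel) and
`α + θ K = m K` (the exponential terms agree), that is, when `K = α / (m - θ)` and
`γ = β / (m - θ)`.
-/

section VolterraStep

open MeasureTheory

/-- The affine Volterra operator `u ↦ c + β ∫ₐᵗ u + θ u(t)`, the right-hand side of the
recursion. The term `c` is constant in `t`, but may change from one iteration to the next. -/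
def volterraStep (a β θ c : ℝ) (u : ℝ → ℝ) (t : ℝ) : ℝ :=
  c + β * (∫ s in a..t, u s) + θ * u t

variable {a b t β θ : ℝ}

lemma volterraStep_mono_on {c : ℝ} {u v : ℝ → ℝ} (hβ : 0 ≤ β) (hθ : 0 ≤ θ) (hat : a ≤ t)
    (hu : IntervalIntegrable u volume a t) (hv : IntervalIntegrable v volume a t)
    (huv : ∀ s ∈ Icc a t, u s ≤ v s) :
    volterraStep a β θ c u t ≤ volterraStep a β θ c v t := by
  have h_int : ∫ s in a..t, u s ≤ ∫ s in a..t, v s := integral_mono_on hat hu hv huv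
  have h_end : u t ≤ v t := huv t (right_mem_Icc.2 hat)
  unfold volterraStep
  gcongr

theorem le_of_le_volterraStep_of_volterraStep_le {c : ℕ → ℝ} {Y Z : ℕ → ℝ → ℝ}
    (hβ : 0 ≤ β) (hθ : 0 ≤ θ)
    (hY : ∀ ν, IntegrableOn (Y ν) (Icc a b)) (hZ : ∀ ν, IntegrableOn (Z ν) (Icc a b))
    (h_zero : ∀ t ∈ Icc a b, Y 0 t ≤ Z 0 t)
    (hY_succ : ∀ ν, ∀ t ∈ Icc a b, Y (ν + 1) t ≤ volterraStep a β θ (c ν) (Y ν) t)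
    (hZ_succ : ∀ ν, ∀ t ∈ Icc a b, volterraStep a β θ (c ν) (Z ν) t ≤ Z (ν + 1) t) (ν : ℕ) :
    ∀ t ∈ Icc a b, Y ν t ≤ Z ν t := by
  induction ν with
  | zero => exact h_zero
  | succ ν ih =>
    intro t ht
    have h_sub : Icc a t ⊆ Icc a b := Icc_subset_Icc_right ht.2
    have h_integrable {u : ℝ → ℝ} (hu : IntegrableOn u (Icc a b)) :
        IntervalIntegrable u volume a t :=
      (intervalIntegrable_iff_integrableOn_Icc_of_le ht.1).2 (hu.mono_set h_sub)
    calc Y (ν + 1) t ≤ volterraStep a β θ (c ν) (Y ν) t := hY_succ ν t ht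
      _ ≤ volterraStep a β θ (c ν) (Z ν) t :=
        volterraStep_mono_on hβ hθ ht.1 (h_integrable (hY ν)) (h_integrable (hZ ν))
          fun s hs => ih s (h_sub hs)
      _ ≤ Z (ν + 1) t := hZ_succ ν t ht

lemma mul_integral_exp_mul (γ a t : ℝ) :
    γ * ∫ s in a..t, Real.exp (γ * s) = Real.exp (γ * t) - Real.exp (γ * a) := by
  rw [mul_integral_comp_mul_left, integral_exp]

lemma volterraStep_const_mul_exp {α K m γ : ℝ} (c t : ℝ) (h_const : β * K = α * γ)
    (h_exp : α + θ * K = m * K) :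
    volterraStep 0 β θ (α * c) (fun s => c * K * Real.exp (γ * s)) t =
      c * m * K * Real.exp (γ * t) := by
  have h_int := mul_integral_exp_mul γ 0 t
  rw [mul_zero, Real.exp_zero] at h_int
  unfold volterraStep
  rw [intervalIntegral.integral_const_mul]
  set I := ∫ s in (0 : ℝ)..t, Real.exp (γ * s)
  calc α * c + β * (c * K * I) + θ * (c * K * Real.exp (γ * t))
      = α * c + α * c * (γ * I) + θ * (c * K * Real.exp (γ * t)) := by
        linear_combination c * I * h_const
    _ = c * (α + θ * K) * Real.exp (γ * t) := by rw [h_int]; ring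
    _ = c * m * K * Real.exp (γ * t) := by rw [h_exp]; ring

theorem statement9_general {T α m : ℝ} {Y : ℕ → ℝ → ℝ} (hα : 0 ≤ α) (hβ : 0 ≤ β) (hθ : 0 ≤ θ)
    (hm : θ < m) (hY : ∀ ν, IntegrableOn (Y ν) (Icc 0 T))
    (h_zero : ∀ t ∈ Icc 0 T, Y 0 t ≤ α / (m - θ))
    (h_succ : ∀ ν, ∀ t ∈ Icc 0 T,
      Y (ν + 1) t ≤ α * m ^ ν + β * (∫ s in (0 : ℝ)..t, Y ν s) + θ * Y ν t) (ν : ℕ) :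
    ∀ t ∈ Icc 0 T, Y ν t ≤ m ^ ν * (α / (m - θ)) * Real.exp (β / (m - θ) * t) := by
  have h_pos : 0 < m - θ := sub_pos.2 hm
  set K := α / (m - θ) with hK
  set γ := β / (m - θ) with hγ
  have h_const : β * K = α * γ := by rw [hK, hγ]; ring
  have h_exp : α + θ * K = m * K := by linear_combination -(mul_div_cancel₀ α h_pos.ne')
  refine le_of_le_volterraStep_of_volterraStep_le (c := fun ν => α * m ^ ν)
    (Z := fun ν t => m ^ ν * K * Real.exp (γ * t)) hβ hθ hY
    (fun ν => Continuous.integrableOn_Icc (by fun_prop)) (fun t ht => ?_) h_succ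
    (fun ν t _ => ?_) ν
  · have h_one_le : 1 ≤ Real.exp (γ * t) :=
      Real.one_le_exp (mul_nonneg (div_nonneg hβ h_pos.le) ht.1)
    simpa only [pow_zero, one_mul] using
      (h_zero t ht).trans (le_mul_of_one_le_right (div_nonneg hα h_pos.le) h_one_le)
  · simpa only [pow_succ] using (volterraStep_const_mul_exp (m ^ ν) t h_const h_exp).le

end VolterraStep

lemma two_mul_div_two_mul_sub_one (x m : ℝ) : 2 * x / (2 * m - 1) = x / (m - 1 / 2) := by
  rw [← mul_div_mul_left x (m - 1 / 2) two_ne_zero, mul_sub, mul_one_div_cancel two_ne_zero]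

/-- a Gronwall-type iteration lemma.  If `Y₀ ≤ α` and
`Y_{ν+1}(t) ≤ α mᵛ + β ∫₀ᵗ Y_ν + ½ Y_ν(t)`, then
`Y_ν(t) ≤ mᵛ K e^{γt}` with `K = 2α/(2m-1)`, `γ = 2β/(2m-1)`. -/
theorem statement9
    (T α β m : ℝ) (hT : 0 ≤ T) (hα : 0 < α) (hβ : 0 < β)
    (hm : m ∈ Ioc (1/2 : ℝ) 1)
    (Y : ℕ → ℝ → ℝ)
    (hYcont : ∀ ν, ContinuousOn (Y ν) (Icc 0 T))
    (hYnonneg : ∀ ν, ∀ t ∈ Icc (0:ℝ) T, 0 ≤ Y ν t)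
    (hY0 : ∀ t ∈ Icc (0:ℝ) T, Y 0 t ≤ α)
    (hYrec : ∀ ν : ℕ, ∀ t ∈ Icc (0:ℝ) T,
      Y (ν + 1) t ≤ α * m ^ ν + β * (∫ σ in (0:ℝ)..t, Y ν σ) + (1/2) * Y ν t) :
    ∀ ν : ℕ, 1 ≤ ν → ∀ t ∈ Icc (0:ℝ) T,
      Y ν t ≤ m ^ ν * (2 * α / (2 * m - 1)) * Real.exp (2 * β / (2 * m - 1) * t) := by
  have h_zero : ∀ t ∈ Icc 0 T, Y 0 t ≤ α / (m - 1 / 2) := fun t ht =>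
    (hY0 t ht).trans (le_div_self hα.le (sub_pos.2 hm.1) (by linarith [hm.2]))
  simpa only [two_mul_div_two_mul_sub_one] using fun ν _ => statement9_general hα.le hβ.le
    one_half_pos.le hm.1 (fun ν => (hYcont ν).integrableOn_Icc) h_zero hYrec ν
end
end
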